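/- arXiv:2504.06916 — 2 statements merged into one kernel-verified Lean document; each statement's English description precedes it below -/
import Mathlib

section
/- Let V be a finite-dimensional vector space over an algebraically closed field K of characteristic zero, and let G ≤ GL(V) be a finite reflection group. Let v ∈ V with stabiliser G_v, and let η = π^{-1}(π(v)) be the scheme-theoretic fibre of the quotient morphism π : V → V/G over π(v). Then the stalk O_{η,v} satisfies Γ(O_{η,v}) ≅ K⟨G_v⟩, the regular representation of the stabiliser G_v. -/
open MvPolynomial

noncomputable section

/-- The "stalk at `v`" ideal: for a finite subscheme cut out by `J ⊆ K[x₁,…,xₙ]`, the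
kernel of `K[x₁,…,xₙ] → O_{Spec(K[x]/J), v}` consists of the functions annihilated by
some function not vanishing at `v`. -/
def stalkAtIdeal (K : Type*) [Field K] (nn : ℕ) (v : Fin nn → K)
    (J : Ideal (MvPolynomial (Fin nn) K)) : Ideal (MvPolynomial (Fin nn) K) where
  carrier := {f | ∃ t : MvPolynomial (Fin nn) K, eval v t ≠ 0 ∧ t * f ∈ J}
  zero_mem' := ⟨1, by simp, by simpa using J.zero_mem⟩
  add_mem' := by
    rintro a b ⟨t, ht, hta⟩ ⟨s, hs, hsb⟩
    refine ⟨t * s, by simp [ht, hs], ?_⟩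
    have h : t * s * (a + b) = s * (t * a) + t * (s * b) := by ring
    rw [h]
    exact J.add_mem (J.mul_mem_left _ hta) (J.mul_mem_left _ hsb)
  smul_mem' := by
    rintro c x ⟨t, ht, htx⟩
    refine ⟨t, ht, ?_⟩
    have h : t * (c • x) = c * (t * x) := by rw [smul_eq_mul]; ring
    rw [h]
    exact J.mul_mem_left _ htx

/-- The stabiliser of the point `v` in a group acting linearly via `φ`. -/
def ptStabilizer {K : Type*} [Field K] {nn : ℕ} {G : Type*} [Group G]
    (φ : G →* ((Fin nn → K) ≃ₗ[K] (Fin nn → K))) (v : Fin nn → K) : Subgroup G where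
  carrier := {g | φ g v = v}
  one_mem' := by simp
  mul_mem' := by
    intro a b ha hb
    show φ (a * b) v = v
    rw [map_mul]
    show φ a (φ b v) = v
    rw [hb, ha]
  inv_mem' := by
    intro a ha
    show φ a⁻¹ v = v
    calc φ a⁻¹ v = φ a⁻¹ (φ a v) := by rw [ha]
    _ = φ (a⁻¹ * a) v := by rw [map_mul]; rfl
    _ = v := by rw [inv_mul_cancel, map_one]; rfl

/-!
By Chevalley's theorem `K[V]` is free over the invariants `A = K[V]ᴳ`, of rank `|G|`, so the fibre
over `π(v)` has length at most `|G|`. Its ideal is `G`-stable, so its stalks at the points of the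
orbit of `v` are conjugate; they are independent quotients of the fibre and there are `[G : G_v]`
of them, so the stalk at `v` has length at most `|G_v|`.

To recognise the representation, choose a `G_v`-stable complement `C` of the stalk ideal `J` in
`K[V]`. Invariants of `G_v` not vanishing at `v` are units modulo the ideal of the fibre of
`V → V/G_v`, so that ideal contains `J`, and by Nakayama's lemma `C` generates `K[V]` over
`K[V]^{G_v}` after inverting an invariant `r`. Restrict polynomials to a free `G_v`-orbit on which
`r` does not vanish: there invariants are constant, so `C` already surjects onto the functions on
the orbit, which form the regular representation. Since `dim C = dim K[V]/J ≤ |G_v|`, this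
surjection is an isomorphism.
-/

section Homogeneous

variable {ι K : Type*} [CommSemiring K]

theorem homogeneousComponent_mul (d : ℕ) (p q : MvPolynomial ι K) :
    homogeneousComponent d (p * q) = ∑ ij ∈ Finset.HasAntidiagonal.antidiagonal d,
      homogeneousComponent ij.1 p * homogeneousComponent ij.2 q := by
  classical
  let := gradedAlgebra (σ := ι) (R := K)
  simp only [← decomposition.decompose'_apply]
  change (DirectSum.decompose (homogeneousSubmodule ι K) (p * q) d : MvPolynomial ι K) = _
  rw [DirectSum.decompose_mul, DirectSum.coe_mul_apply_eq_sum_antidiagonal]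
  rfl

theorem homogeneousComponent_add_mul_of_isHomogeneous {e : ℕ} {p : MvPolynomial ι K}
    (hp : p.IsHomogeneous e) (d : ℕ) (q : MvPolynomial ι K) :
    homogeneousComponent (e + d) (p * q) = p * homogeneousComponent d q := by
  classical
  let := gradedAlgebra (σ := ι) (R := K)
  simp only [← decomposition.decompose'_apply]
  exact DirectSum.coe_decompose_mul_add_of_left_mem (homogeneousSubmodule ι K) hp

end Homogeneous

section Invariants

variable (K ι G : Type*) [CommRing K] [Group G] [MulSemiringAction G (MvPolynomial ι K)]
  [SMulCommClass G K (MvPolynomial ι K)]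

/-- The ring of invariants `K[V]ᴳ`. -/
abbrev polynomialInvariants : Subalgebra K (MvPolynomial ι K) :=
  FixedPoints.subalgebra K (MvPolynomial ι K) G

variable {ι}

/-- The ideal of the point `π(v)` of `V/G`: the invariants vanishing at `v`. -/
def quotientPointIdeal (v : ι → K) : Ideal (polynomialInvariants K ι G) :=
  RingHom.ker ((aeval v).comp (polynomialInvariants K ι G).val)

/-- The ideal of the scheme-theoretic fibre `π⁻¹(π(v))` of the quotient morphism `π : V → V/G`.
For `v = 0` this is the Hilbert ideal, generated by the invariants without constant term. -/
def fibreIdeal (v : ι → K) : Ideal (MvPolynomial ι K) :=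
  (quotientPointIdeal K G v).map (algebraMap (polynomialInvariants K ι G) (MvPolynomial ι K))

variable {K G}

theorem mem_quotientPointIdeal {v : ι → K} {s : polynomialInvariants K ι G} :
    s ∈ quotientPointIdeal K G v ↔ eval v (s : MvPolynomial ι K) = 0 :=
  Iff.rfl

theorem fibreIdeal_eq_span (v : ι → K) : fibreIdeal K G v =
    Ideal.span {f : MvPolynomial ι K | (∀ g : G, g • f = f) ∧ eval v f = 0} := by
  refine congrArg Ideal.span (Set.ext fun f => ⟨?_, fun hf => ⟨⟨f, hf.1⟩, hf.2, rfl⟩⟩)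
  rintro ⟨s, hs, rfl⟩
  exact ⟨s.2, hs⟩

theorem mem_fibreIdeal_of_eval_eq_zero {v : ι → K} {s : MvPolynomial ι K}
    (hs : s ∈ polynomialInvariants K ι G) (hsv : eval v s = 0) : s ∈ fibreIdeal K G v := by
  rw [fibreIdeal_eq_span]
  exact Ideal.subset_span ⟨hs, hsv⟩

theorem smul_C (g : G) (a : K) : g • (C a : MvPolynomial ι K) = C a :=
  smul_algebraMap g a

theorem sub_C_mem_fibreIdeal {s : MvPolynomial ι K} (hs : s ∈ polynomialInvariants K ι G)
    (v : ι → K) : s - C (eval v s) ∈ fibreIdeal K G v :=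
  mem_fibreIdeal_of_eval_eq_zero (sub_mem hs fun g => smul_C g _) (by simp)

theorem smul_mem_fibreIdeal {v : ι → K} (g : G) {f : MvPolynomial ι K}
    (hf : f ∈ fibreIdeal K G v) : g • f ∈ fibreIdeal K G v := by
  suffices fibreIdeal K G v ≤ (fibreIdeal K G v).comap (MulSemiringAction.toRingHom G _ g) from
    this hf
  refine Ideal.map_le_iff_le_comap.mpr fun s hs => ?_
  change g • (s : MvPolynomial ι K) ∈ fibreIdeal K G v
  rw [s.2 g]
  exact Ideal.mem_map_of_mem _ hs

theorem fibreIdeal_le_fibreIdeal_subgroup (H : Subgroup G) (v : ι → K) :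
    fibreIdeal K G v ≤ fibreIdeal K H v := by
  simp only [fibreIdeal_eq_span]
  exact Ideal.span_mono fun f hf => ⟨fun h => hf.1 h, hf.2⟩

theorem sum_smul_mem_polynomialInvariants [Fintype G] (f : MvPolynomial ι K) :
    ∑ g : G, g • f ∈ polynomialInvariants K ι G := fun h => by
  rw [Finset.smul_sum]
  exact Fintype.sum_equiv (Equiv.mulLeft h) _ _ fun g => smul_smul h g f

theorem prod_smul_mem_polynomialInvariants [Fintype G] (f : MvPolynomial ι K) :
    ∏ g : G, g • f ∈ polynomialInvariants K ι G := fun h => by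
  rw [Finset.smul_prod']
  exact Fintype.prod_equiv (Equiv.mulLeft h) _ _ fun g => smul_smul h g f

end Invariants

section Linear

variable {K ι G : Type*} [CommRing K] [Group G] [MulSemiringAction G (MvPolynomial ι K)]
  [SMulCommClass G K (MvPolynomial ι K)]
  (hlin : ∀ (g : G) (j : ι), (g • X j : MvPolynomial ι K).IsHomogeneous 1)

include hlin

theorem isHomogeneous_smul (g : G) {d : ℕ} {f : MvPolynomial ι K} (hf : f.IsHomogeneous d) :
    (g • f).IsHomogeneous d := by
  have hg : g • f = aeval (fun j => g • X j) f :=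
    DFunLike.congr_fun (aeval_unique (MulSemiringAction.toAlgHom K (MvPolynomial ι K) g)) f
  rw [hg]
  simpa using hf.aeval _ (hlin g)

theorem homogeneousComponent_smul (g : G) (d : ℕ) (f : MvPolynomial ι K) :
    homogeneousComponent d (g • f) = g • homogeneousComponent d f := by
  have hcomp (i : ℕ) : homogeneousComponent d (g • homogeneousComponent i f) =
      if d = i then g • homogeneousComponent i f else 0 :=
    homogeneousComponent_of_mem (isHomogeneous_smul hlin g (homogeneousComponent_isHomogeneous i f))
  conv_lhs => rw [← sum_homogeneousComponent f]
  simp only [Finset.smul_sum, map_sum, hcomp, Finset.sum_ite_eq, Finset.mem_range]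
  split_ifs with hd
  · rfl
  · rw [homogeneousComponent_eq_zero _ _ (by omega), smul_zero]

theorem totalDegree_smul_le (g : G) (f : MvPolynomial ι K) :
    (g • f).totalDegree ≤ f.totalDegree := by
  conv_lhs => rw [← sum_homogeneousComponent f, Finset.smul_sum]
  refine totalDegree_finsetSum_le fun i hi => ?_
  exact (isHomogeneous_smul hlin g (homogeneousComponent_isHomogeneous i f)).totalDegree_le.trans
    (Nat.lt_succ_iff.mp (Finset.mem_range.mp hi))

theorem homogeneousComponent_mem_polynomialInvariants {s : MvPolynomial ι K}
    (hs : s ∈ polynomialInvariants K ι G) (d : ℕ) :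
    homogeneousComponent d s ∈ polynomialInvariants K ι G := fun g => by
  rw [← homogeneousComponent_smul hlin, hs g]

end Linear

section Averaging

theorem smul_sub_mem_of_closure_eq_top {G M : Type*} [Group G] [AddCommGroup M]
    [DistribMulAction G M] {N : AddSubgroup M} (hN : ∀ g : G, ∀ x ∈ N, g • x ∈ N) {T : Set G}
    (hT : Subgroup.closure T = ⊤) {m : M} (hm : ∀ g ∈ T, g • m - m ∈ N) (g : G) :
    g • m - m ∈ N := by
  have hg : g ∈ Subgroup.closure T := hT ▸ Subgroup.mem_top g
  induction hg using Subgroup.closure_induction with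
  | mem x hx => exact hm x hx
  | one => simp
  | mul x y _ _ hx hy => simpa [smul_sub, mul_smul] using N.add_mem (hN x _ hy) hx
  | inv x _ hx => simpa [smul_sub] using N.neg_mem (hN x⁻¹ _ hx)

theorem mem_of_sum_smul_mem_of_smul_sub_mem {k G M : Type*} [Field k] [AddCommGroup M]
    [Module k M] [SMul G M] [Fintype G] [NeZero (Nat.card G : k)] {N : Submodule k M} {m : M}
    (hsum : ∑ g : G, g • m ∈ N) (hsub : ∀ g : G, g • m - m ∈ N) : m ∈ N := by
  have hcard : (Nat.card G : k) • m ∈ N := by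
    have h := sub_mem hsum (sum_mem fun g (_ : g ∈ Finset.univ) => hsub g)
    rwa [← Finset.sum_sub_distrib, Finset.sum_congr rfl fun g _ => sub_sub_cancel (g • m) m,
      Finset.sum_const, Finset.card_univ, ← Nat.card_eq_fintype_card,
      ← Nat.cast_smul_eq_nsmul k] at h
  exact (N.smul_mem_iff (NeZero.ne _)).mp hcard

end Averaging

section Reflections

variable {K ι G : Type*}

variable (K ι) in
/-- An element acts on polynomial functions as a reflection if all the differences `g • f - f` are
multiples of one nonzero linear form, the equation of the reflecting hyperplane. -/
def ActsAsReflection [CommRing K] [SMul G (MvPolynomial ι K)] (g : G) : Prop :=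
  ∃ l : MvPolynomial ι K, l.IsHomogeneous 1 ∧ l ≠ 0 ∧ ∀ f, l ∣ g • f - f

variable [CommRing K] [IsDomain K] [Group G] [MulSemiringAction G (MvPolynomial ι K)]
  [SMulCommClass G K (MvPolynomial ι K)]

theorem sum_smul_eq_zero_of_smul_sub_eq {κ : Type*} {t : Finset κ}
    {s : κ → polynomialInvariants K ι G} {r q : κ → MvPolynomial ι K} {l : MvPolynomial ι K}
    (hl : l ≠ 0) {g : G} (hq : ∀ i, g • r i - r i = l * q i) (hr : ∑ i ∈ t, s i • r i = 0) :
    ∑ i ∈ t, s i • q i = 0 := by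
  refine (mul_eq_zero.mp ?_).resolve_left hl
  have hgr : ∑ i ∈ t, s i • g • r i = 0 := by
    simp_rw [← smul_comm g, ← Finset.smul_sum, hr, smul_zero]
  simp_rw [Finset.mul_sum, mul_smul_comm, ← hq, smul_sub, Finset.sum_sub_distrib, hgr, hr, sub_zero]

theorem totalDegree_le_of_smul_sub_eq
    (hlin : ∀ (g : G) (j : ι), (g • X j : MvPolynomial ι K).IsHomogeneous 1)
    {l q r : MvPolynomial ι K} (hl : l.IsHomogeneous 1)
    (hl0 : l ≠ 0) {g : G} (hq : g • r - r = l * q) {d : ℕ} (hr : r.totalDegree ≤ d + 1) :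
    q.totalDegree ≤ d := by
  by_cases hq0 : q = 0
  · simp [hq0]
  have hlq : (l * q).totalDegree ≤ d + 1 := hq ▸ (totalDegree_sub _ _).trans
    (max_le ((totalDegree_smul_le hlin g r).trans hr) hr)
  rw [totalDegree_mul_of_isDomain hl0 hq0, hl.totalDegree hl0] at hlq
  omega

end Reflections

section InvariantRelations

variable {K ι G : Type*} [Field K] [Group G] [Finite G] [NeZero (Nat.card G : K)]
  [MulSemiringAction G (MvPolynomial ι K)] [SMulCommClass G K (MvPolynomial ι K)]
  (hlin : ∀ (g : G) (j : ι), (g • X j : MvPolynomial ι K).IsHomogeneous 1)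
  (hgen : Subgroup.closure {g : G | ActsAsReflection K ι g} = ⊤)

include hlin hgen

theorem mem_fibreIdeal_zero_of_smul_sub_mem {d : ℕ} (hd : d ≠ 0) {r : MvPolynomial ι K}
    (hr : r.IsHomogeneous d)
    (hmem : ∀ g : G, ActsAsReflection K ι g → g • r - r ∈ fibreIdeal K G 0) :
    r ∈ fibreIdeal K G 0 := by
  have := Fintype.ofFinite G
  have hsub := smul_sub_mem_of_closure_eq_top (N := (fibreIdeal K G 0).toAddSubgroup)
    (fun g _ hx => smul_mem_fibreIdeal g hx) hgen hmem
  have hsum : (∑ g : G, g • r).IsHomogeneous d :=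
    IsHomogeneous.sum _ _ _ fun g _ => isHomogeneous_smul hlin g hr
  refine mem_of_sum_smul_mem_of_smul_sub_mem (N := (fibreIdeal K G 0).restrictScalars K)
    (mem_fibreIdeal_of_eval_eq_zero (sum_smul_mem_polynomialInvariants r) ?_) hsub
  rw [eval_zero, constantCoeff_eq]
  exact hsum.coeff_eq_zero (by simpa using hd.symm)

-- Applying a reflection to the relation and dividing by the equation of its hyperplane lowers the
-- degree of the `r i`; averaging over `G` then lifts the conclusion back to the original relation.
theorem sum_dual_smul_homogeneousComponent_mem {κ : Type*} {t : Finset κ}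
    {s : κ → polynomialInvariants K ι G} (μ : Module.Dual K (polynomialInvariants K ι G)) (d : ℕ)
    {r : κ → MvPolynomial ι K} (hr : ∀ i ∈ t, (r i).totalDegree ≤ d)
    (hsum : ∑ i ∈ t, s i • r i = 0) :
    ∑ i ∈ t, μ (s i) • homogeneousComponent d (r i) ∈ fibreIdeal K G 0 := by
  induction d generalizing r with
  | zero =>
    have hconst : ∑ i ∈ t, coeff 0 (r i) • s i = 0 := by
      refine Subtype.ext ?_
      rw [AddSubmonoidClass.coe_finsetSum, ZeroMemClass.coe_zero, ← hsum]
      refine Finset.sum_congr rfl fun i hi => ?_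
      conv_rhs => rw [totalDegree_eq_zero_iff_eq_C.mp (Nat.le_zero.mp (hr i hi))]
      rw [Subalgebra.coe_smul, smul_eq_C_mul, Subalgebra.smul_def, smul_eq_mul, mul_comm]
    have hμ : ∑ i ∈ t, μ (s i) * coeff 0 (r i) = 0 := by
      simpa [mul_comm] using congrArg μ hconst
    simp_rw [homogeneousComponent_zero, smul_eq_C_mul, ← map_mul, ← map_sum, hμ, map_zero,
      zero_mem]
  | succ d ih =>
    refine mem_fibreIdeal_zero_of_smul_sub_mem hlin hgen d.succ_ne_zero
      (IsHomogeneous.sum _ _ _ fun i _ =>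
        Submodule.smul_mem (homogeneousSubmodule ι K (d + 1)) _
          (homogeneousComponent_isHomogeneous _ _)) fun g ⟨l, hl, hl0, hdvd⟩ => ?_
    choose q hq using fun i => hdvd (r i)
    have hqmem := ih (fun i hi => totalDegree_le_of_smul_sub_eq hlin hl hl0 (hq i) (hr i hi))
      (sum_smul_eq_zero_of_smul_sub_eq hl0 hq hsum)
    convert Ideal.mul_mem_left _ l hqmem using 1
    rw [Finset.smul_sum, Finset.mul_sum, ← Finset.sum_sub_distrib]
    refine Finset.sum_congr rfl fun i _ => ?_
    rw [smul_comm g, ← smul_sub, ← homogeneousComponent_smul hlin, ← map_sub, hq, add_comm d,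
      homogeneousComponent_add_mul_of_isHomogeneous hl, mul_smul_comm]

theorem linearIndependent_polynomialInvariants {κ : Type*} {b : κ → MvPolynomial ι K}
    {e : κ → ℕ} (hb : ∀ i, (b i).IsHomogeneous (e i))
    (hind : LinearIndependent K fun i => Ideal.Quotient.mk (fibreIdeal K G 0) (b i)) :
    LinearIndependent (polynomialInvariants K ι G) b := by
  classical
  rw [linearIndependent_iff']
  by_contra! ⟨t, s, hsum, i₁, hi₁, hsi₁⟩
  obtain ⟨i₀, hi₀, hmax⟩ :=
    (t.filter (s · ≠ 0)).exists_max_image e ⟨i₁, Finset.mem_filter.mpr ⟨hi₁, hsi₁⟩⟩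
  rw [← Finset.sum_filter_of_ne (p := (s · ≠ 0)) fun i _ hi => left_ne_zero_of_smul hi] at hsum
  refine (Finset.mem_filter.mp hi₀).2
    ((Module.forall_dual_apply_eq_zero_iff K (s i₀)).mp fun μ => ?_)
  have htop := sum_dual_smul_homogeneousComponent_mem hlin hgen μ (e i₀)
    (fun i hi => (hb i).totalDegree_le.trans (hmax i hi)) hsum
  have hcoef := linearIndependent_iff'.mp hind _
    (fun i => if e i₀ = e i then μ (s i) else 0) ?_ i₀ hi₀
  · simpa using hcoef
  · rw [← Ideal.Quotient.eq_zero_iff_mem, ← Ideal.Quotient.mkₐ_eq_mk K, map_sum] at htop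
    rw [← htop]
    refine Finset.sum_congr rfl fun i _ => ?_
    rw [map_smul, homogeneousComponent_of_mem (hb i)]
    split_ifs <;> simp

end InvariantRelations

section GradedNakayama

variable {K ι G : Type*} [CommRing K] [Group G] [MulSemiringAction G (MvPolynomial ι K)]
  [SMulCommClass G K (MvPolynomial ι K)]
  (hlin : ∀ (g : G) (j : ι), (g • X j : MvPolynomial ι K).IsHomogeneous 1)

include hlin

theorem homogeneousComponent_mem_of_mem_fibreIdeal_zero
    {N : Submodule (polynomialInvariants K ι G) (MvPolynomial ι K)} {d : ℕ}
    (hN : ∀ e < d, ∀ f, homogeneousComponent e f ∈ N) {x : MvPolynomial ι K}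
    (hx : x ∈ fibreIdeal K G 0) : homogeneousComponent d x ∈ N := by
  have hx' : x ∈ quotientPointIdeal K G (0 : ι → K) •
      (⊤ : Submodule (polynomialInvariants K ι G) (MvPolynomial ι K)) := by
    rwa [Ideal.smul_top_eq_map]
  refine Submodule.smul_induction_on hx' (fun s hs f _ => ?_) fun x y hx hy => ?_
  · rw [Subalgebra.smul_def, smul_eq_mul, homogeneousComponent_mul]
    refine sum_mem fun ⟨i, j⟩ hij => ?_
    rw [Finset.HasAntidiagonal.mem_antidiagonal] at hij
    rcases i.eq_zero_or_pos with rfl | hi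
    · rw [mem_quotientPointIdeal, eval_zero, constantCoeff_eq] at hs
      simp [hs]
    · exact N.smul_mem
        (⟨_, homogeneousComponent_mem_polynomialInvariants hlin s.2 i⟩ :
          polynomialInvariants K ι G) (hN j (by omega) f)
  · rw [map_add]
    exact add_mem hx hy

theorem eq_top_of_forall_exists_sub_mem_fibreIdeal_zero
    {N : Submodule (polynomialInvariants K ι G) (MvPolynomial ι K)}
    (hhom : ∀ f ∈ N, ∀ d, homogeneousComponent d f ∈ N)
    (hN : ∀ f, ∃ u ∈ N, f - u ∈ fibreIdeal K G 0) : N = ⊤ := by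
  have hcomp (d : ℕ) : ∀ f, homogeneousComponent d f ∈ N := by
    induction d using Nat.strong_induction_on with
    | _ d ih =>
      intro f
      obtain ⟨u, hu, hfu⟩ := hN f
      have h := add_mem (homogeneousComponent_mem_of_mem_fibreIdeal_zero hlin ih hfu) (hhom u hu d)
      rwa [← map_add, sub_add_cancel] at h
  refine (Submodule.eq_top_iff').mpr fun f => ?_
  rw [← sum_homogeneousComponent f]
  exact sum_mem fun i _ => hcomp i f

theorem homogeneousComponent_mem_span {B : Set (MvPolynomial ι K)}
    (hB : ∀ b ∈ B, ∃ d, b.IsHomogeneous d) {f : MvPolynomial ι K}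
    (hf : f ∈ Submodule.span (polynomialInvariants K ι G) B) (d : ℕ) :
    homogeneousComponent d f ∈ Submodule.span (polynomialInvariants K ι G) B := by
  induction hf using Submodule.span_induction generalizing d with
  | zero => simp
  | add x y _ _ hx hy => rw [map_add]; exact add_mem (hx d) (hy d)
  | mem b hb =>
    obtain ⟨e, he⟩ := hB b hb
    rw [homogeneousComponent_of_mem he]
    split_ifs
    exacts [Submodule.subset_span hb, zero_mem _]
  | smul s x _ hx =>
    rw [Subalgebra.smul_def, smul_eq_mul, homogeneousComponent_mul]
    exact sum_mem fun ij _ => Submodule.smul_mem _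
      (⟨_, homogeneousComponent_mem_polynomialInvariants hlin s.2 ij.1⟩ :
        polynomialInvariants K ι G) (hx ij.2)

end GradedNakayama

section Chevalley

variable {K ι G : Type*} [Field K] [Group G] [Finite G] [NeZero (Nat.card G : K)]
  [MulSemiringAction G (MvPolynomial ι K)] [SMulCommClass G K (MvPolynomial ι K)]

/-- **Chevalley's theorem**. -/
theorem free_polynomialInvariants
    (hlin : ∀ (g : G) (j : ι), (g • X j : MvPolynomial ι K).IsHomogeneous 1)
    (hgen : Subgroup.closure {g : G | ActsAsReflection K ι g} = ⊤) :
    Module.Free (polynomialInvariants K ι G) (MvPolynomial ι K) := by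
  let q := (Ideal.Quotient.mkₐ K (fibreIdeal K G (0 : ι → K))).toLinearMap
  obtain ⟨κ, a, -, hspan, hind⟩ := exists_linearIndependent' K (q ∘ basisMonomials ι K)
  let b (i : κ) : MvPolynomial ι K := basisMonomials ι K (a i)
  have hb (i : κ) : (b i).IsHomogeneous (a i).degree := by
    simpa [b] using isHomogeneous_monomial 1 rfl
  have hsurj (f : MvPolynomial ι K) : ∃ u ∈ Submodule.span K (Set.range b), q u = q f := by
    rw [← Submodule.mem_map, Submodule.map_span, ← Set.range_comp]
    refine hspan.ge ?_
    rw [Set.range_comp, ← Submodule.map_span, (basisMonomials ι K).span_eq]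
    exact Submodule.mem_map_of_mem Submodule.mem_top
  refine Module.Free.of_basis (Module.Basis.mk
    (linearIndependent_polynomialInvariants hlin hgen hb hind) (top_le_iff.mpr ?_))
  refine eq_top_of_forall_exists_sub_mem_fibreIdeal_zero hlin (fun f hf =>
    homogeneousComponent_mem_span hlin (Set.forall_mem_range.mpr fun i => ⟨_, hb i⟩) hf) fun f => ?_
  obtain ⟨u, hu, huf⟩ := hsurj f
  exact ⟨u, Submodule.span_le_restrictScalars K _ _ hu, Ideal.Quotient.eq.mp huf.symm⟩

end Chevalley

section Rank

variable {K ι G : Type*} [Field K] [Group G] [Finite G] [MulSemiringAction G (MvPolynomial ι K)]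
  [SMulCommClass G K (MvPolynomial ι K)]

instance isInvariant_polynomialInvariants :
    Algebra.IsInvariant (polynomialInvariants K ι G) (MvPolynomial ι K) G :=
  ⟨fun f hf => ⟨⟨f, hf⟩, rfl⟩⟩

instance finite_polynomialInvariants [Finite ι] :
    Module.Finite (polynomialInvariants K ι G) (MvPolynomial ι K) := by
  have := Algebra.IsInvariant.isIntegral (polynomialInvariants K ι G) (MvPolynomial ι K) G
  have : Algebra.FiniteType (polynomialInvariants K ι G) (MvPolynomial ι K) :=
    .of_restrictScalars_finiteType K _ _
  exact Algebra.IsIntegral.finite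

theorem finrank_polynomialInvariants [FaithfulSMul G (MvPolynomial ι K)] :
    Module.finrank (polynomialInvariants K ι G) (MvPolynomial ι K) = Nat.card G := by
  have : IsGaloisGroup G (polynomialInvariants K ι G) (MvPolynomial ι K) :=
    ⟨‹_›, inferInstance, inferInstance⟩
  exact (IsGaloisGroup.card_eq_finrank' G _ _).symm

omit [Finite G] in
theorem span_range_mk_fibreIdeal_eq_top {κ : Type*} {b : κ → MvPolynomial ι K}
    (hb : Submodule.span (polynomialInvariants K ι G) (Set.range b) = ⊤) (v : ι → K) :
    Submodule.span K (Set.range fun i => Ideal.Quotient.mk (fibreIdeal K G v) (b i)) = ⊤ := by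
  let q := Ideal.Quotient.mkₐ K (fibreIdeal K G v)
  have hq (s : polynomialInvariants K ι G) (f : MvPolynomial ι K) :
      q (s • f) = eval v (s : MvPolynomial ι K) • q f := by
    have hs : q s = q (C (eval v (s : MvPolynomial ι K))) :=
      Ideal.Quotient.eq.mpr (sub_C_mem_fibreIdeal s.2 v)
    rw [Subalgebra.smul_def, smul_eq_mul, map_mul, hs, ← map_mul, ← smul_eq_C_mul, map_smul]
  refine (Submodule.eq_top_iff').mpr fun x => ?_
  obtain ⟨f, rfl⟩ := Ideal.Quotient.mkₐ_surjective K (fibreIdeal K G v) x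
  have hf : f ∈ Submodule.span (polynomialInvariants K ι G) (Set.range b) :=
    hb ▸ Submodule.mem_top
  induction hf using Submodule.span_induction with
  | zero => simp
  | add x y _ _ hx hy => rw [map_add]; exact add_mem hx hy
  | mem x hx =>
    obtain ⟨i, rfl⟩ := hx
    exact Submodule.subset_span ⟨i, rfl⟩
  | smul s x _ hx =>
    change q (s • x) ∈ _
    rw [hq]
    exact Submodule.smul_mem _ _ hx

instance finite_quotient_fibreIdeal [Finite ι] (v : ι → K) :
    Module.Finite K (MvPolynomial ι K ⧸ fibreIdeal K G v) := by
  obtain ⟨n, b, hb⟩ :=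
    Module.Finite.exists_fin (R := polynomialInvariants K ι G) (M := MvPolynomial ι K)
  exact ⟨(Submodule.fg_def).mpr ⟨_, Set.finite_range _, span_range_mk_fibreIdeal_eq_top hb v⟩⟩

theorem finrank_quotient_fibreIdeal_le [Finite ι]
    [Module.Free (polynomialInvariants K ι G) (MvPolynomial ι K)] (v : ι → K) :
    Module.finrank K (MvPolynomial ι K ⧸ fibreIdeal K G v) ≤
      Module.finrank (polynomialInvariants K ι G) (MvPolynomial ι K) := by
  let b := Module.finBasis (polynomialInvariants K ι G) (MvPolynomial ι K)
  rw [← finrank_top, ← span_range_mk_fibreIdeal_eq_top b.span_eq v]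
  exact (finrank_range_le_card _).trans_eq (Fintype.card_fin _)

end Rank

section Points

variable {K ι : Type*} [Field K]

theorem isCoprime_of_X_sub_C_pow_mem {p q : ι → K} (hpq : p ≠ q) {I J : Ideal (MvPolynomial ι K)}
    (hI : ∀ j, ∃ m : ℕ, (X j - C (p j)) ^ m ∈ I) (hJ : ∀ j, ∃ m : ℕ, (X j - C (q j)) ^ m ∈ J) :
    IsCoprime I J := by
  obtain ⟨j, hj⟩ := Function.ne_iff.mp hpq
  obtain ⟨a, ha⟩ := hI j
  obtain ⟨b, hb⟩ := hJ j
  have hunit : IsCoprime (X j - C (p j) : MvPolynomial ι K) (C (p j - q j)) :=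
    isCoprime_one_right.of_isCoprime_of_dvd_right <|
      isUnit_iff_dvd_one.mp ((sub_ne_zero.mpr hj).isUnit.map C)
  have hcop : IsCoprime (X j - C (p j) : MvPolynomial ι K) (X j - C (q j)) := by
    simpa using hunit.add_mul_left_right 1
  obtain ⟨c, d, hcd⟩ := hcop.pow (m := a) (n := b)
  exact Ideal.isCoprime_iff_exists.mpr
    ⟨_, I.mul_mem_left c ha, _, J.mul_mem_left d hb, hcd⟩

theorem exists_eval_eq_of_injective {κ : Type*} [Finite κ] {p : κ → ι → K}
    (hp : Function.Injective p) (c : κ → K) : ∃ f : MvPolynomial ι K, ∀ i, eval (p i) f = c i := by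
  have hcop : Pairwise fun i j => IsCoprime (RingHom.ker (eval (p i))) (RingHom.ker (eval (p j))) :=
    fun i j hij => isCoprime_of_X_sub_C_pow_mem (hp.ne hij)
      (fun k => ⟨1, by simp [RingHom.mem_ker]⟩) fun k => ⟨1, by simp [RingHom.mem_ker]⟩
  obtain ⟨f, hf⟩ := Ideal.pi_quotient_surjective hcop fun i => Ideal.Quotient.mk _ (C (c i))
  refine ⟨f, fun i => ?_⟩
  have hfi : f - C (c i) ∈ RingHom.ker (eval (p i)) := Ideal.Quotient.eq.mp (hf i)
  simpa [RingHom.mem_ker, sub_eq_zero] using hfi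

end Points

section Stalk

variable {K : Type*} [Field K] {n : ℕ}

theorem stalkAtIdeal_mono {v : Fin n → K} {I J : Ideal (MvPolynomial (Fin n) K)} (h : I ≤ J) :
    stalkAtIdeal K n v I ≤ stalkAtIdeal K n v J := fun _ ⟨t, ht, htf⟩ => ⟨t, ht, h htf⟩

variable (J : Ideal (MvPolynomial (Fin n) K))

theorem le_stalkAtIdeal (v : Fin n → K) : J ≤ stalkAtIdeal K n v J :=
  fun f hf => ⟨1, by simp, by simpa using hf⟩

variable [Module.Finite K (MvPolynomial (Fin n) K ⧸ J)]

instance finite_quotient_stalkAtIdeal (v : Fin n → K) :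
    Module.Finite K (MvPolynomial (Fin n) K ⧸ stalkAtIdeal K n v J) :=
  .of_surjective (Ideal.Quotient.factorₐ K (le_stalkAtIdeal J v)).toLinearMap
    (Ideal.Quotient.factor_surjective (le_stalkAtIdeal J v))

-- Removing from the minimal polynomial of `f` modulo `J` its zero at `f(p)` leaves a cofactor whose
-- value at `f` does not vanish at `p`.
theorem exists_sub_C_pow_mem_stalkAtIdeal (p : Fin n → K) (f : MvPolynomial (Fin n) K) :
    ∃ m : ℕ, (f - C (eval p f)) ^ m ∈ stalkAtIdeal K n p J := by
  let F := minpoly K (Ideal.Quotient.mk J f)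
  have hF : Polynomial.aeval f F ∈ J := by
    rw [← Ideal.Quotient.eq_zero_iff_mem, ← Ideal.Quotient.mkₐ_eq_mk K,
      ← Polynomial.aeval_algHom_apply]
    exact minpoly.aeval K _
  obtain ⟨Q, hQ, hndvd⟩ := Polynomial.exists_eq_pow_rootMultiplicity_mul_and_not_dvd F
    (minpoly.ne_zero (Algebra.IsIntegral.isIntegral _)) (eval p f)
  refine ⟨F.rootMultiplicity (eval p f), Polynomial.aeval f Q, ?_, ?_⟩
  · rwa [← coe_aeval_eq_eval, RingHom.coe_coe, ← Polynomial.aeval_algHom_apply,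
      Polynomial.coe_aeval_eq_eval, aeval_eq_eval, ne_eq, ← Polynomial.IsRoot.def,
      ← Polynomial.dvd_iff_isRoot]
  · rw [hQ] at hF
    simpa [mul_comm] using hF

theorem isCoprime_stalkAtIdeal {p q : Fin n → K} (hpq : p ≠ q) :
    IsCoprime (stalkAtIdeal K n p J) (stalkAtIdeal K n q J) :=
  isCoprime_of_X_sub_C_pow_mem hpq
    (fun j => by simpa using exists_sub_C_pow_mem_stalkAtIdeal J p (X j))
    fun j => by simpa using exists_sub_C_pow_mem_stalkAtIdeal J q (X j)

theorem sum_finrank_quotient_stalkAtIdeal_le {κ : Type*} [Fintype κ] {p : κ → Fin n → K}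
    (hp : Function.Injective p) :
    ∑ i, Module.finrank K (MvPolynomial (Fin n) K ⧸ stalkAtIdeal K n (p i) J) ≤
      Module.finrank K (MvPolynomial (Fin n) K ⧸ J) := by
  let L : (MvPolynomial (Fin n) K ⧸ J) →ₗ[K]
      ∀ i, MvPolynomial (Fin n) K ⧸ stalkAtIdeal K n (p i) J :=
    LinearMap.pi fun i => (Ideal.Quotient.factorₐ K (le_stalkAtIdeal J (p i))).toLinearMap
  have hL : Function.Surjective L := fun y => by
    obtain ⟨f, hf⟩ := Ideal.pi_quotient_surjective
      (fun i j hij => isCoprime_stalkAtIdeal J (hp.ne hij)) y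
    exact ⟨Ideal.Quotient.mk J f, funext hf⟩
  rw [← Module.finrank_pi_fintype]
  exact LinearMap.finrank_le_finrank_of_surjective hL

end Stalk

section LinearAction

variable {K : Type*} [Field K] {n : ℕ} {G : Type*} [Group G]
  (φ : G →* ((Fin n → K) ≃ₗ[K] (Fin n → K)))

theorem map_inv_apply_map_apply (g : G) (w : Fin n → K) : φ g⁻¹ (φ g w) = w := by
  rw [← LinearEquiv.mul_apply, ← map_mul, inv_mul_cancel, map_one, LinearEquiv.coe_one, id]

theorem injective_out_apply (v : Fin n → K) :
    Function.Injective fun i : G ⧸ ptStabilizer φ v => φ i.out v := fun i j hij => by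
  have hij' : φ j.out v = φ i.out v := hij.symm
  rw [← Quotient.out_eq' i, ← Quotient.out_eq' j]
  refine QuotientGroup.eq.mpr ?_
  change φ (i.out⁻¹ * j.out) v = v
  rw [map_mul, LinearEquiv.mul_apply, hij', map_inv_apply_map_apply]

end LinearAction

section Equivariance

variable {K : Type*} [Field K] {n : ℕ} {G : Type*} [Group G]
  [MulSemiringAction G (MvPolynomial (Fin n) K)]
  {φ : G →* ((Fin n → K) ≃ₗ[K] (Fin n → K))}
  (hφ : ∀ (g : G) (f : MvPolynomial (Fin n) K) (w : Fin n → K),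
    eval w (g • f) = eval (φ g⁻¹ w) f)

include hφ

theorem eval_apply_smul (g : G) (f : MvPolynomial (Fin n) K) (w : Fin n → K) :
    eval (φ g w) (g • f) = eval w f := by
  rw [hφ, map_inv_apply_map_apply]

theorem eval_apply_of_forall_smul_eq {s : MvPolynomial (Fin n) K} (hs : ∀ g : G, g • s = s) (g : G)
    (w : Fin n → K) : eval (φ g w) s = eval w s := by
  simpa only [hs] using eval_apply_smul hφ g s w

variable {J : Ideal (MvPolynomial (Fin n) K)} (hJ : ∀ g : G, ∀ f ∈ J, g • f ∈ J)

include hJ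

theorem smul_mem_stalkAtIdeal (g : G) {p : Fin n → K} {f : MvPolynomial (Fin n) K}
    (hf : f ∈ stalkAtIdeal K n p J) : g • f ∈ stalkAtIdeal K n (φ g p) J := by
  obtain ⟨t, ht, htf⟩ := hf
  exact ⟨g • t, by rwa [eval_apply_smul hφ], by simpa only [smul_mul'] using hJ g _ htf⟩

theorem stalkAtIdeal_apply_eq_map (g : G) (p : Fin n → K) : stalkAtIdeal K n (φ g p) J =
    (stalkAtIdeal K n p J).map (MulSemiringAction.toRingHom G _ g) := by
  refine le_antisymm (fun f hf => ?_)
    (Ideal.map_le_iff_le_comap.mpr fun f hf => smul_mem_stalkAtIdeal hφ hJ g hf)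
  have h := smul_mem_stalkAtIdeal hφ hJ g⁻¹ hf
  rw [map_inv_apply_map_apply] at h
  simpa using Ideal.mem_map_of_mem (MulSemiringAction.toRingHom G _ g) h

variable [SMulCommClass G K (MvPolynomial (Fin n) K)]

theorem finrank_quotient_stalkAtIdeal_apply (g : G) (p : Fin n → K) :
    Module.finrank K (MvPolynomial (Fin n) K ⧸ stalkAtIdeal K n (φ g p) J) =
      Module.finrank K (MvPolynomial (Fin n) K ⧸ stalkAtIdeal K n p J) :=
  (Ideal.quotientEquivAlg _ _ (MulSemiringAction.toAlgEquiv K (MvPolynomial (Fin n) K) g)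
    (stalkAtIdeal_apply_eq_map hφ hJ g p)).toLinearEquiv.finrank_eq.symm

theorem index_mul_finrank_quotient_stalkAtIdeal_le [Finite G]
    [Module.Finite K (MvPolynomial (Fin n) K ⧸ J)] (v : Fin n → K) :
    (ptStabilizer φ v).index *
        Module.finrank K (MvPolynomial (Fin n) K ⧸ stalkAtIdeal K n v J) ≤
      Module.finrank K (MvPolynomial (Fin n) K ⧸ J) := by
  have := Fintype.ofFinite (G ⧸ ptStabilizer φ v)
  have h := sum_finrank_quotient_stalkAtIdeal_le J (injective_out_apply φ v)
  simpa only [finrank_quotient_stalkAtIdeal_apply hφ hJ, Finset.sum_const, Finset.card_univ,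
    smul_eq_mul, ← Nat.card_eq_fintype_card, Subgroup.index_eq_card] using h

end Equivariance

section Divisibility

variable {K ι G : Type*} [CommRing K] [Group G] [MulSemiringAction G (MvPolynomial ι K)]
  [SMulCommClass G K (MvPolynomial ι K)]

theorem dvd_smul_sub_of_forall_dvd_smul_X_sub_X {l : MvPolynomial ι K} {g : G}
    (hl : ∀ j, l ∣ g • X j - X j) (f : MvPolynomial ι K) : l ∣ g • f - f := by
  let q := Ideal.Quotient.mkₐ K (Ideal.span {l})
  have hq : q.comp (MulSemiringAction.toAlgHom K (MvPolynomial ι K) g) = q :=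
    algHom_ext fun j => Ideal.Quotient.eq.mpr (Ideal.mem_span_singleton.mpr (hl j))
  exact Ideal.mem_span_singleton.mp (Ideal.Quotient.eq.mp (DFunLike.congr_fun hq f))

end Divisibility

section LinearForms

variable {K : Type*} [Field K] {n : ℕ}

theorem eval_toMvPolynomial_toMatrix' (T : (Fin n → K) →ₗ[K] (Fin n → K)) (j : Fin n)
    (w : Fin n → K) : eval w ((LinearMap.toMatrix' T).toMvPolynomial j) = T w j := by
  rw [Matrix.toMvPolynomial_eval_eq_apply, LinearMap.toMatrix'_mulVec]

theorem exists_forall_toMvPolynomial_dvd [Infinite K] {T : (Fin n → K) →ₗ[K] (Fin n → K)}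
    (hT : Module.finrank K (LinearMap.range T) = 1) :
    ∃ i, (LinearMap.toMatrix' T).toMvPolynomial i ≠ 0 ∧ ∀ j,
      (LinearMap.toMatrix' T).toMvPolynomial i ∣ (LinearMap.toMatrix' T).toMvPolynomial j := by
  obtain ⟨⟨_, w₀, rfl⟩, hu0, hu⟩ := finrank_eq_one_iff'.mp hT
  obtain ⟨i, hi⟩ := Function.ne_iff.mp (Subtype.coe_ne_coe.mpr hu0)
  change T w₀ i ≠ 0 at hi
  refine ⟨i, fun h => hi ?_, fun j => ⟨C (T w₀ j / T w₀ i), MvPolynomial.funext fun w => ?_⟩⟩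
  · rw [← eval_toMvPolynomial_toMatrix', h, map_zero]
  · obtain ⟨c, hc⟩ := hu ⟨T w, w, rfl⟩
    have hTw : T w = c • T w₀ := (congrArg Subtype.val hc).symm
    simp only [map_mul, eval_C, eval_toMvPolynomial_toMatrix', hTw, Pi.smul_apply, smul_eq_mul]
    field_simp

end LinearForms

section LinearReflections

variable {K : Type*} [Field K] [Infinite K] {n : ℕ} {G : Type*} [Group G]
  [MulSemiringAction G (MvPolynomial (Fin n) K)]
  {φ : G →* ((Fin n → K) ≃ₗ[K] (Fin n → K))}
  (hφ : ∀ (g : G) (f : MvPolynomial (Fin n) K) (w : Fin n → K),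
    eval w (g • f) = eval (φ g⁻¹ w) f)

include hφ

theorem isHomogeneous_smul_X (g : G) (j : Fin n) :
    (g • X j : MvPolynomial (Fin n) K).IsHomogeneous 1 := by
  have hg : g • X j = (LinearMap.toMatrix' (φ g⁻¹).toLinearMap).toMvPolynomial j :=
    MvPolynomial.funext fun w => by rw [hφ, eval_toMvPolynomial_toMatrix', eval_X]; rfl
  exact hg ▸ Matrix.toMvPolynomial_isHomogeneous _ j

theorem inv_smul_X_sub_X (g : G) (j : Fin n) : (g⁻¹ • X j - X j : MvPolynomial (Fin n) K) =
    (LinearMap.toMatrix' ((φ g).toLinearMap - LinearMap.id)).toMvPolynomial j :=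
  MvPolynomial.funext fun w => by
    rw [map_sub, hφ, inv_inv, eval_toMvPolynomial_toMatrix', eval_X, eval_X]; rfl

omit [Infinite K] in
theorem faithfulSMul_of_injective (hinj : Function.Injective φ) :
    FaithfulSMul G (MvPolynomial (Fin n) K) where
  eq_of_smul_eq_smul {g h} hgh := inv_injective <| hinj <| LinearEquiv.ext fun w =>
    funext fun j => by simpa [hφ] using congrArg (eval w) (hgh (X j))

theorem exists_eval_ne_zero_and_injective [Finite G] [FaithfulSMul G (MvPolynomial (Fin n) K)]
    {f : MvPolynomial (Fin n) K} (hf : f ≠ 0) :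
    ∃ w, eval w f ≠ 0 ∧ Function.Injective fun g => φ g w := by
  classical
  have := Fintype.ofFinite G
  have hsep (gh : G × G) :
      ∃ q : MvPolynomial (Fin n) K, gh.1 ≠ gh.2 → gh.1⁻¹ • q - gh.2⁻¹ • q ≠ 0 := by
    by_contra! h
    exact (h 0).1 (inv_injective (eq_of_smul_eq_smul fun q => sub_eq_zero.mp (h q).2))
  choose q hq using hsep
  have hP : f * ∏ gh ∈ Finset.univ.offDiag, (gh.1⁻¹ • q gh - gh.2⁻¹ • q gh) ≠ 0 :=
    mul_ne_zero hf (Finset.prod_ne_zero_iff.mpr fun gh h => hq gh (Finset.mem_offDiag.mp h).2.2)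
  obtain ⟨w, hw⟩ := not_forall.mp (mt (MvPolynomial.funext (q := 0)) hP)
  rw [map_mul, map_zero, map_prod] at hw
  refine ⟨w, left_ne_zero_of_mul hw, fun g h hgh => by_contra fun hne => ?_⟩
  refine Finset.prod_ne_zero_iff.mp (right_ne_zero_of_mul hw) (g, h)
    (Finset.mem_offDiag.mpr ⟨Finset.mem_univ g, Finset.mem_univ h, hne⟩) ?_
  have hgh' : φ g w = φ h w := hgh
  rw [map_sub, hφ, hφ, inv_inv, inv_inv, hgh', sub_self]

variable [SMulCommClass G K (MvPolynomial (Fin n) K)]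

theorem actsAsReflection_inv {g : G}
    (hg : Module.finrank K (LinearMap.ker ((φ g).toLinearMap - LinearMap.id)) + 1 = n) :
    ActsAsReflection K (Fin n) g⁻¹ := by
  have hrank : Module.finrank K (LinearMap.range ((φ g).toLinearMap - LinearMap.id)) = 1 := by
    have := LinearMap.finrank_range_add_finrank_ker ((φ g).toLinearMap - LinearMap.id)
    rw [Module.finrank_fin_fun] at this
    omega
  obtain ⟨i, hi, hdvd⟩ := exists_forall_toMvPolynomial_dvd hrank
  exact ⟨_, Matrix.toMvPolynomial_isHomogeneous _ i, hi,
    dvd_smul_sub_of_forall_dvd_smul_X_sub_X fun j => inv_smul_X_sub_X hφ g j ▸ hdvd j⟩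

theorem closure_actsAsReflection_eq_top (hrefl : Subgroup.closure {g : G |
      Module.finrank K (LinearMap.ker ((φ g).toLinearMap - LinearMap.id)) + 1 = n} = ⊤) :
    Subgroup.closure {g : G | ActsAsReflection K (Fin n) g} = ⊤ := by
  rw [eq_top_iff, ← hrefl, Subgroup.closure_le]
  exact fun g hg => inv_inv g ▸ inv_mem (Subgroup.subset_closure (actsAsReflection_inv hφ hg))

end LinearReflections

section LocalGeneration

variable {K ι G : Type*} [CommRing K] [Group G] [MulSemiringAction G (MvPolynomial ι K)]
  [SMulCommClass G K (MvPolynomial ι K)]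

theorem exists_eval_eq_one_and_smul_mem
    [Module.Finite (polynomialInvariants K ι G) (MvPolynomial ι K)] (v : ι → K)
    {N : Submodule (polynomialInvariants K ι G) (MvPolynomial ι K)}
    (hN : ∀ f, ∃ u ∈ N, f - u ∈ fibreIdeal K G v) :
    ∃ r : polynomialInvariants K ι G, eval v (r : MvPolynomial ι K) = 1 ∧ ∀ f, r • f ∈ N := by
  have hsup : ⊤ ≤ N ⊔ quotientPointIdeal K G v • ⊤ := fun f _ => by
    obtain ⟨u, hu, hfu⟩ := hN f
    rw [← add_sub_cancel u f]
    refine Submodule.add_mem_sup hu ?_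
    rwa [Ideal.smul_top_eq_map]
  obtain ⟨r, hr, hrN⟩ :=
    Submodule.exists_sub_one_mem_and_smul_le_of_fg_of_le_sup Module.Finite.fg_top le_rfl hsup
  refine ⟨r, ?_, fun f => hrN (Submodule.smul_mem_pointwise_smul f r ⊤ Submodule.mem_top)⟩
  rw [mem_quotientPointIdeal] at hr
  simpa [sub_eq_zero] using hr

end LocalGeneration

theorem exists_isCompl_of_forall_smul_mem {k G M : Type*} [Field k] [Group G] [Finite G]
    [NeZero (Nat.card G : k)] [AddCommGroup M] [Module k M] [DistribMulAction G M]
    [SMulCommClass G k M] {N : Submodule k M} (hN : ∀ g : G, ∀ x ∈ N, g • x ∈ N) :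
    ∃ C : Submodule k M, IsCompl N C ∧ ∀ g : G, ∀ x ∈ C, g • x ∈ C := by
  obtain ⟨C, hC⟩ := exists_isCompl
    (⟨N, fun g x hx => hN g x hx⟩ : Subrepresentation (Representation.ofDistribMulAction k G M))
  refine ⟨C.toSubmodule, ?_, fun g x hx => C.apply_mem_toSubmodule g hx⟩
  exact .of_eq (congrArg Subrepresentation.toSubmodule hC.inf_eq_bot)
    (congrArg Subrepresentation.toSubmodule hC.sup_eq_top)

section Orbit

variable {K : Type*} [Field K] {n : ℕ} {G : Type*} [Group G]

/-- Restriction of polynomial functions to the orbit of `w`, as functions of the group element. -/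
def orbitEval (φ : G →* ((Fin n → K) ≃ₗ[K] (Fin n → K))) (w : Fin n → K) :
    MvPolynomial (Fin n) K →ₗ[K] (G → K) :=
  LinearMap.pi fun g => (aeval (φ g w)).toLinearMap

variable {φ : G →* ((Fin n → K) ≃ₗ[K] (Fin n → K))} {w : Fin n → K}

theorem orbitEval_apply (f : MvPolynomial (Fin n) K) (g : G) :
    orbitEval φ w f g = eval (φ g w) f :=
  rfl

theorem orbitEval_surjective [Finite G] (hw : Function.Injective fun g => φ g w) :
    Function.Surjective (orbitEval φ w) := fun c => by
  obtain ⟨f, hf⟩ := exists_eval_eq_of_injective hw c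
  exact ⟨f, funext hf⟩

variable [MulSemiringAction G (MvPolynomial (Fin n) K)]
  (hφ : ∀ (g : G) (f : MvPolynomial (Fin n) K) (w : Fin n → K),
    eval w (g • f) = eval (φ g⁻¹ w) f)

include hφ

theorem orbitEval_smul (g : G) (f : MvPolynomial (Fin n) K) :
    orbitEval φ w (g • f) = fun x => orbitEval φ w f (g⁻¹ * x) := by
  ext x
  rw [orbitEval_apply, orbitEval_apply, hφ, map_mul, LinearEquiv.mul_apply]

theorem exists_linearEquiv_of_isCompl [Finite G] {J : Ideal (MvPolynomial (Fin n) K)}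
    (hJ : ∀ g : G, ∀ f ∈ J, g • f ∈ J) [Module.Finite K (MvPolynomial (Fin n) K ⧸ J)]
    (hrank : Module.finrank K (MvPolynomial (Fin n) K ⧸ J) ≤ Nat.card G)
    {C : Submodule K (MvPolynomial (Fin n) K)} (hC : IsCompl (J.restrictScalars K) C)
    (hCG : ∀ g : G, ∀ f ∈ C, g • f ∈ C) (htop : C.map (orbitEval φ w) = ⊤) :
    ∃ E : (MvPolynomial (Fin n) K ⧸ J) ≃ₗ[K] (G → K), ∀ (g : G) (f : MvPolynomial (Fin n) K),
      E (Ideal.Quotient.mk J (g • f)) = fun x => E (Ideal.Quotient.mk J f) (g⁻¹ * x) := by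
  have := Fintype.ofFinite G
  let e : (MvPolynomial (Fin n) K ⧸ J) ≃ₗ[K] C :=
    (Submodule.Quotient.restrictScalarsEquiv K J).symm ≪≫ₗ
      Submodule.quotientEquivOfIsCompl (J.restrictScalars K) C hC
  let L : (MvPolynomial (Fin n) K ⧸ J) →ₗ[K] (G → K) := (orbitEval φ w).domRestrict C ∘ₗ e
  have hL (c : MvPolynomial (Fin n) K) (hc : c ∈ C) :
      L (Ideal.Quotient.mk J c) = orbitEval φ w c :=
    congrArg (fun c : C => orbitEval φ w c)
      (Submodule.quotientEquivOfIsCompl_apply_mk_right hC ⟨c, hc⟩)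
  have hsurj : Function.Surjective L := fun y => by
    obtain ⟨c, hc, rfl⟩ := htop ▸ Submodule.mem_top (x := y)
    exact ⟨_, hL c hc⟩
  have hrank' : Module.finrank K (MvPolynomial (Fin n) K ⧸ J) = Module.finrank K (G → K) := by
    refine le_antisymm ?_ (LinearMap.finrank_le_finrank_of_surjective hsurj)
    rwa [Module.finrank_fintype_fun_eq_card, ← Nat.card_eq_fintype_card]
  have hbij : Function.Bijective L :=
    ⟨(LinearMap.injective_iff_surjective_of_finrank_eq_finrank hrank').mpr hsurj, hsurj⟩
  refine ⟨.ofBijective L hbij, fun g f => ?_⟩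
  obtain ⟨j, hj, c, hc, rfl⟩ := Submodule.mem_sup.mp (hC.sup_eq_top ▸ Submodule.mem_top (x := f))
  have hj' : Ideal.Quotient.mk J j = 0 := Ideal.Quotient.eq_zero_iff_mem.mpr hj
  have hgj : Ideal.Quotient.mk J (g • j) = 0 := Ideal.Quotient.eq_zero_iff_mem.mpr (hJ g j hj)
  simp only [smul_add, map_add (Ideal.Quotient.mk J), hj', hgj, zero_add]
  change L _ = fun x => L _ _
  rw [hL _ (hCG g c hc), hL c hc, orbitEval_smul hφ]

variable [SMulCommClass G K (MvPolynomial (Fin n) K)]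

theorem orbitEval_invariant_smul (s : polynomialInvariants K (Fin n) G)
    (f : MvPolynomial (Fin n) K) :
    orbitEval φ w (s • f) = eval w (s : MvPolynomial (Fin n) K) • orbitEval φ w f := by
  ext x
  rw [Pi.smul_apply, orbitEval_apply, orbitEval_apply, Subalgebra.smul_def, smul_eq_mul, map_mul,
    eval_apply_of_forall_smul_eq hφ s.2, smul_eq_mul]

theorem map_orbitEval_eq_top [Finite G] (hw : Function.Injective fun g => φ g w)
    {C : Submodule K (MvPolynomial (Fin n) K)} {r : polynomialInvariants K (Fin n) G}
    (hrw : eval w (r : MvPolynomial (Fin n) K) ≠ 0)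
    (hr : ∀ f, r • f ∈ Submodule.span (polynomialInvariants K (Fin n) G)
      (C : Set (MvPolynomial (Fin n) K))) :
    C.map (orbitEval φ w) = ⊤ := by
  have hspan : ∀ f ∈ Submodule.span (polynomialInvariants K (Fin n) G)
      (C : Set (MvPolynomial (Fin n) K)), orbitEval φ w f ∈ C.map (orbitEval φ w) := fun f hf => by
    induction hf using Submodule.span_induction with
    | zero => simp
    | mem f hf => exact Submodule.mem_map_of_mem hf
    | add f f' _ _ hf hf' => rw [map_add]; exact add_mem hf hf'
    | smul s f _ hf => rw [orbitEval_invariant_smul hφ]; exact Submodule.smul_mem _ _ hf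
  refine (Submodule.eq_top_iff').mpr fun c => ?_
  obtain ⟨f, rfl⟩ := orbitEval_surjective hw c
  rw [← Submodule.smul_mem_iff _ hrw, ← orbitEval_invariant_smul hφ]
  exact hspan _ (hr f)

end Orbit

section RegularRepresentation

variable {K : Type*} [Field K] [Infinite K] {n : ℕ} {G : Type*} [Group G] [Finite G]
  [NeZero (Nat.card G : K)] [MulSemiringAction G (MvPolynomial (Fin n) K)]
  [SMulCommClass G K (MvPolynomial (Fin n) K)] [FaithfulSMul G (MvPolynomial (Fin n) K)]
  {φ : G →* ((Fin n → K) ≃ₗ[K] (Fin n → K))}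
  (hφ : ∀ (g : G) (f : MvPolynomial (Fin n) K) (w : Fin n → K),
    eval w (g • f) = eval (φ g⁻¹ w) f)

include hφ

theorem exists_linearEquiv_of_le_fibreIdeal {J : Ideal (MvPolynomial (Fin n) K)}
    (hJ : ∀ g : G, ∀ f ∈ J, g • f ∈ J) {v : Fin n → K} (hJv : J ≤ fibreIdeal K G v)
    [Module.Finite K (MvPolynomial (Fin n) K ⧸ J)]
    (hrank : Module.finrank K (MvPolynomial (Fin n) K ⧸ J) ≤ Nat.card G) :
    ∃ E : (MvPolynomial (Fin n) K ⧸ J) ≃ₗ[K] (G → K), ∀ (g : G) (f : MvPolynomial (Fin n) K),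
      E (Ideal.Quotient.mk J (g • f)) = fun x => E (Ideal.Quotient.mk J f) (g⁻¹ * x) := by
  obtain ⟨C, hC, hCG⟩ := exists_isCompl_of_forall_smul_mem (N := J.restrictScalars K) hJ
  obtain ⟨r, hrv, hrC⟩ := exists_eval_eq_one_and_smul_mem v
    (N := Submodule.span (polynomialInvariants K (Fin n) G) (C : Set (MvPolynomial (Fin n) K)))
    fun f => by
      obtain ⟨j, hj, c, hc, rfl⟩ :=
        Submodule.mem_sup.mp (hC.sup_eq_top ▸ Submodule.mem_top (x := f))
      exact ⟨c, Submodule.subset_span hc, by simpa using hJv hj⟩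
  have hr : (r : MvPolynomial (Fin n) K) ≠ 0 := fun h => by simp [h] at hrv
  obtain ⟨w, hrw, hw⟩ := exists_eval_ne_zero_and_injective hφ hr
  exact exists_linearEquiv_of_isCompl hφ hJ hrank hC hCG (map_orbitEval_eq_top hφ hw hrw hrC)

end RegularRepresentation

section StalkOfFibre

variable {K : Type*} [Field K] {n : ℕ} {G : Type*} [Group G]
  [MulSemiringAction G (MvPolynomial (Fin n) K)] [SMulCommClass G K (MvPolynomial (Fin n) K)]

-- The norm of `t` is invariant and nonzero at `v`, hence a unit modulo the fibre ideal.
theorem stalkAtIdeal_fibreIdeal_le [Finite G] {v : Fin n → K}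
    (hv : ∀ (g : G) (f : MvPolynomial (Fin n) K), eval v (g • f) = eval v f) :
    stalkAtIdeal K n v (fibreIdeal K G v) ≤ fibreIdeal K G v := by
  have := Fintype.ofFinite G
  rintro f ⟨t, ht, htf⟩
  let N : MvPolynomial (Fin n) K := ∏ g : G, g • t
  have hN : eval v N ≠ 0 := by
    simpa only [N, map_prod, hv, Finset.prod_ne_zero_iff] using fun _ _ => ht
  have hNf : N * f ∈ fibreIdeal K G v :=
    Ideal.mem_of_dvd _ (mul_dvd_mul_right
      (by simpa using Finset.dvd_prod_of_mem (fun g : G => g • t) (Finset.mem_univ 1)) f) htf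
  have hCf : C (eval v N) * f ∈ fibreIdeal K G v := by
    have h := sub_mem hNf <| Ideal.mul_mem_right f _ <|
      sub_C_mem_fibreIdeal (prod_smul_mem_polynomialInvariants (G := G) t) v
    rwa [sub_mul, sub_sub_cancel] at h
  exact (Ideal.unit_mul_mem_iff_mem _ ((isUnit_iff_ne_zero.mpr hN).map C)).mp hCf

end StalkOfFibre

section ReflectionGroup

variable {K : Type*} [Field K] [Infinite K] {n : ℕ} {G : Type*} [Group G] [Finite G]
  [NeZero (Nat.card G : K)] [MulSemiringAction G (MvPolynomial (Fin n) K)]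
  [SMulCommClass G K (MvPolynomial (Fin n) K)]
  {φ : G →* ((Fin n → K) ≃ₗ[K] (Fin n → K))}
  (hφ : ∀ (g : G) (f : MvPolynomial (Fin n) K) (w : Fin n → K),
    eval w (g • f) = eval (φ g⁻¹ w) f)
  (hinj : Function.Injective φ)

include hφ hinj

theorem finrank_quotient_stalkAtIdeal_fibreIdeal_le
    (hrefl : Subgroup.closure {g : G |
      Module.finrank K (LinearMap.ker ((φ g).toLinearMap - LinearMap.id)) + 1 = n} = ⊤)
    (v : Fin n → K) :
    Module.finrank K (MvPolynomial (Fin n) K ⧸ stalkAtIdeal K n v (fibreIdeal K G v)) ≤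
      Nat.card (ptStabilizer φ v) := by
  have := faithfulSMul_of_injective hφ hinj
  have := free_polynomialInvariants (isHomogeneous_smul_X hφ)
    (closure_actsAsReflection_eq_top hφ hrefl)
  refine Nat.le_of_mul_le_mul_left ?_
    (Nat.pos_of_ne_zero (ptStabilizer φ v).index_ne_zero_of_finite)
  calc (ptStabilizer φ v).index * _
    _ ≤ Module.finrank K (MvPolynomial (Fin n) K ⧸ fibreIdeal K G v) :=
      index_mul_finrank_quotient_stalkAtIdeal_le hφ (fun g _ => smul_mem_fibreIdeal g) v
    _ ≤ Module.finrank (polynomialInvariants K (Fin n) G) (MvPolynomial (Fin n) K) :=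
      finrank_quotient_fibreIdeal_le v
    _ = Nat.card G := finrank_polynomialInvariants
    _ = (ptStabilizer φ v).index * Nat.card (ptStabilizer φ v) :=
      (ptStabilizer φ v).index_mul_card.symm

theorem exists_linearEquiv_stalk_fibreIdeal
    (hrefl : Subgroup.closure {g : G |
      Module.finrank K (LinearMap.ker ((φ g).toLinearMap - LinearMap.id)) + 1 = n} = ⊤)
    (v : Fin n → K) :
    ∃ E : (MvPolynomial (Fin n) K ⧸ stalkAtIdeal K n v (fibreIdeal K G v)) ≃ₗ[K]
        (ptStabilizer φ v → K),
      ∀ (h : ptStabilizer φ v) (f : MvPolynomial (Fin n) K),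
        E (Ideal.Quotient.mk _ (h • f)) = fun x => E (Ideal.Quotient.mk _ f) (h⁻¹ * x) := by
  let H := ptStabilizer φ v
  let φH : H →* ((Fin n → K) ≃ₗ[K] (Fin n → K)) := φ.comp H.subtype
  have hφH (h : H) (f : MvPolynomial (Fin n) K) (w : Fin n → K) :
      eval w (h • f) = eval (φH h⁻¹ w) f := hφ h f w
  have : FaithfulSMul H (MvPolynomial (Fin n) K) :=
    faithfulSMul_of_injective hφH (hinj.comp H.subtype_injective)
  have : NeZero (Nat.card H : K) :=
    ⟨ne_zero_of_dvd_ne_zero (NeZero.ne _) (Nat.cast_dvd_cast H.card_subgroup_dvd_card)⟩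
  have hstable (h : H) (f : MvPolynomial (Fin n) K)
      (hf : f ∈ stalkAtIdeal K n v (fibreIdeal K G v)) :
      h • f ∈ stalkAtIdeal K n v (fibreIdeal K G v) := by
    have hhf := smul_mem_stalkAtIdeal hφ (fun g _ => smul_mem_fibreIdeal g) (h : G) hf
    rwa [show φ h v = v from h.2] at hhf
  have hle : stalkAtIdeal K n v (fibreIdeal K G v) ≤ fibreIdeal K H v :=
    (stalkAtIdeal_mono (fibreIdeal_le_fibreIdeal_subgroup H v)).trans
      (stalkAtIdeal_fibreIdeal_le fun h f => by
        rw [hφH, show φH h⁻¹ v = v from h⁻¹.2])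
  exact exists_linearEquiv_of_le_fibreIdeal hφH hstable hle
    (finrank_quotient_stalkAtIdeal_fibreIdeal_le hφ hinj hrefl v)

end ReflectionGroup

theorem stalk_of_quotient_fibre_regular_rep_general
    {K : Type*} [Field K] [Infinite K] (nn : ℕ)
    {G : Type*} [Group G] [Finite G] [NeZero (Nat.card G : K)]
    (φ : G →* ((Fin nn → K) ≃ₗ[K] (Fin nn → K)))
    (hfaithful : Function.Injective φ)
    (hrefl : Subgroup.closure {g : G |
      Module.finrank K ↥(LinearMap.ker ((φ g).toLinearMap - LinearMap.id)) + 1 = nn} = ⊤)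
    (σ : G →* (MvPolynomial (Fin nn) K ≃ₐ[K] MvPolynomial (Fin nn) K))
    (hσ : ∀ (g : G) (f : MvPolynomial (Fin nn) K) (w : Fin nn → K),
      eval w (σ g f) = eval (φ g⁻¹ w) f)
    (v : Fin nn → K) :
    ∃ E : (MvPolynomial (Fin nn) K ⧸
        stalkAtIdeal K nn v
          (Ideal.span {f : MvPolynomial (Fin nn) K |
            (∀ g : G, σ g f = f) ∧ eval v f = 0})) ≃ₗ[K]
      (↥(ptStabilizer φ v) → K),
      ∀ (h : ↥(ptStabilizer φ v)) (f : MvPolynomial (Fin nn) K),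
        E (Ideal.Quotient.mk _ (σ (↑h) f)) =
          fun x : ↥(ptStabilizer φ v) => E (Ideal.Quotient.mk _ f) (h⁻¹ * x) := by
  let : MulSemiringAction G (MvPolynomial (Fin nn) K) := .compHom _ σ
  have : SMulCommClass G K (MvPolynomial (Fin nn) K) := ⟨fun g a f => map_smul (σ g) a f⟩
  have h := exists_linearEquiv_stalk_fibreIdeal hσ hfaithful hrefl v
  rw [fibreIdeal_eq_span] at h
  exact h

/-!
STATEMENT 3: let `G ≤ GL(V)` be a finite reflection group (a finite group acting
faithfully and linearly on `V = Kⁿ`, generated by elements whose fixed space is a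
hyperplane), over an algebraically closed field `K` of characteristic zero.  For `v ∈ V`
let `η = π⁻¹(π(v))` be the scheme-theoretic fibre of the quotient morphism
`π : V → V/G`, cut out by the ideal `I` generated by the `G`-invariant polynomials
vanishing at `v`.  Then the stalk `O_{η,v}` (the quotient of `K[x₁,…,xₙ]` by the stalk
ideal of `I` at `v`) is isomorphic, as a representation of the stabiliser `G_v`, to the
regular representation `K⟨G_v⟩` (realised as the functions `G_v → K` with the regular
action).  Here `σ` is the induced action of `G` on the polynomial ring, determined by
`(σ g f)(w) = f(φ(g⁻¹) w)`.
-/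
theorem stalk_of_quotient_fibre_regular_rep
    {K : Type*} [Field K] [IsAlgClosed K] [CharZero K] (nn : ℕ)
    {G : Type*} [Group G] [Finite G]
    (φ : G →* ((Fin nn → K) ≃ₗ[K] (Fin nn → K)))
    (hfaithful : Function.Injective φ)
    -- `G` is a reflection group: it is generated by its reflections
    (hrefl : Subgroup.closure {g : G |
      Module.finrank K ↥(LinearMap.ker ((φ g).toLinearMap - LinearMap.id)) + 1 = nn} = ⊤)
    -- the action of `G` on the polynomial functions on `V`
    (σ : G →* (MvPolynomial (Fin nn) K ≃ₐ[K] MvPolynomial (Fin nn) K))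
    (hσ : ∀ (g : G) (f : MvPolynomial (Fin nn) K) (w : Fin nn → K),
      eval w (σ g f) = eval (φ g⁻¹ w) f)
    (v : Fin nn → K) :
    ∃ E : (MvPolynomial (Fin nn) K ⧸
        stalkAtIdeal K nn v
          (Ideal.span {f : MvPolynomial (Fin nn) K |
            (∀ g : G, σ g f = f) ∧ eval v f = 0})) ≃ₗ[K]
      (↥(ptStabilizer φ v) → K),
      ∀ (h : ↥(ptStabilizer φ v)) (f : MvPolynomial (Fin nn) K),
        E (Ideal.Quotient.mk _ (σ (↑h) f)) =
          fun x : ↥(ptStabilizer φ v) => E (Ideal.Quotient.mk _ f) (h⁻¹ * x) := by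
  have : NeZero (Nat.card G : K) := ⟨Nat.cast_ne_zero.mpr Nat.card_pos.ne'⟩
  exact stalk_of_quotient_fibre_regular_rep_general nn φ hfaithful hrefl σ hσ v

end
end

section
/- Let G = G(m,e,2) with e odd. Then G has exactly 2d one-dimensional representations, namely χ((xy)^c) and χ(A(xy)^c) for c = 0,…,d−1 with A = x^m − y^m; the character group is generated by χ(xy) of order d and χ(A) of order 2, so it is isomorphic to Z/d × Z/2. Moreover G has exactly (m−1)d/2 isomorphism classes of 2-dimensional irreducible representations and no irreducible representations of dimension greater than 2. -/
noncomputable section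

variable {K : Type*} [Field K]

/-- The diagonal matrix `D(a,b) = diag(ζ^a, ζ^b)` as an element of `GL₂(K)`. -/
def Dgl (ζ : K) (hζ0 : ζ ≠ 0) (a b : ℤ) : GL (Fin 2) K :=
  Matrix.GeneralLinearGroup.mkOfDetNeZero (Matrix.diagonal ![ζ ^ a, ζ ^ b]) (by
    simp only [Matrix.det_diagonal, Fin.prod_univ_two]
    simp only [Matrix.cons_val_zero, Matrix.cons_val_one, Matrix.head_cons]
    exact mul_ne_zero (zpow_ne_zero _ hζ0) (zpow_ne_zero _ hζ0))

/-- The permutation matrix `τ` swapping the two coordinates, as an element of `GL₂(K)`. -/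
def tauGL (K : Type*) [Field K] : GL (Fin 2) K :=
  Matrix.GeneralLinearGroup.mkOfDetNeZero !![(0 : K), 1; 1, 0] (by
    norm_num [Matrix.det_fin_two_of])

/-- The imprimitive reflection group `G(m,e,2) ≤ GL₂(K)`, generated by the diagonal
matrices `D(a,b)` with `a + b ≡ 0 mod e` together with `τ`. -/
def Gme2 (ζ : K) (hζ0 : ζ ≠ 0) (e : ℕ) : Subgroup (GL (Fin 2) K) :=
  Subgroup.closure
    (insert (tauGL K) {A | ∃ a b : ℤ, (e : ℤ) ∣ a + b ∧ A = Dgl ζ hζ0 a b})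

/-- `D(a,b)` with `e ∣ a + b`, as an element of `G(m,e,2)`. -/
def DG (ζ : K) (hζ0 : ζ ≠ 0) (e : ℕ) (a b : ℤ) (h : (e : ℤ) ∣ a + b) :
    ↥(Gme2 ζ hζ0 e) :=
  ⟨Dgl ζ hζ0 a b, Subgroup.subset_closure (Set.mem_insert_of_mem _ ⟨a, b, h, rfl⟩)⟩

/-- `τ` as an element of `G(m,e,2)`. -/
def tauG (ζ : K) (hζ0 : ζ ≠ 0) (e : ℕ) : ↥(Gme2 ζ hζ0 e) :=
  ⟨tauGL K, Subgroup.subset_closure (Set.mem_insert _ _)⟩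

end

/-- A representation is irreducible if the space is nonzero and has no proper nonzero
invariant subspace. -/
def IsIrreducibleRep {K : Type*} [Field K] {G : Type*} [Monoid G]
    {V : Type*} [AddCommGroup V] [Module K V] (ρ : Representation K G V) : Prop :=
  (⊥ : Submodule K V) ≠ ⊤ ∧
    ∀ W : Submodule K V, (∀ g : G, W.map (ρ g) ≤ W) → W = ⊥ ∨ W = ⊤

/-- Two representations on the same space are isomorphic if some linear automorphism
intertwines them. -/
def RepIso {K : Type*} [Field K] {G : Type*} [Monoid G]
    {V : Type*} [AddCommGroup V] [Module K V] (ρ₁ ρ₂ : Representation K G V) : Prop :=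
  ∃ T : V ≃ₗ[K] V, ∀ (g : G) (w : V), T (ρ₁ g w) = ρ₂ g (T w)

/-!
The diagonal subgroup `A` of `G = G(m,e,2)` is abelian of index `2`, and `K` contains enough roots
of unity to diagonalise it. An irreducible representation therefore contains a joint eigenvector
`v` of `A`, and `v, τ v` span an invariant subspace: the dimension is at most `2`, and the
irreducible representations of dimension `2` correspond to the pairs `{χ, χ^τ}` of linear
characters of `A` with `χ ≠ χ^τ`.

There are `md` linear characters of `A`, so everything reduces to showing that those with `χ^τ = χ`
are the `d` powers of `det`. This is where `e` has to be odd: if `e = 2k + 1`, then `D(1,-1)` is the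
quotient of `D(k+1,k)` by its `τ`-conjugate `D(k,k+1)`, so that such a `χ` is trivial on `D(1,-1)`
and is determined by its value, a `d`-th root of unity, on `D(0,e)`. Restrictions to `A` of linear
characters of `G` are of this kind, and two of them with the same restriction differ at most by the
sign of their value on `τ`.
-/

open scoped IsMulCommutative

section Characters

variable {K H : Type*} [Field K] [CommGroup H] [HasEnoughRootsOfUnity K (Monoid.exponent H)]

theorem sum_char_apply_eq_zero [Finite H] [Fintype (H →* Kˣ)] {h : H} (hh : h ≠ 1) :
    ∑ χ : H →* Kˣ, (χ h : K) = 0 := by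
  obtain ⟨χ, hχ⟩ := CommGroup.exists_apply_ne_one_of_hasEnoughRootsOfUnity H K hh
  exact sum_hom_units_eq_zero ((Units.coeHom K).comp (MonoidHom.eval h)) fun h1 =>
    hχ (Units.ext (DFunLike.congr_fun h1 χ))

theorem natCast_card_ne_zero_of_hasEnoughRootsOfUnity [Finite H] : (Nat.card H : K) ≠ 0 := by
  obtain ⟨ζ, hζ⟩ := HasEnoughRootsOfUnity.exists_primitiveRoot K (Monoid.exponent H)
  have hexp : (Monoid.exponent H : K) ≠ 0 := hζ.neZero'.out
  intro hcard
  have hdvd : (Nat.card H : K) ∣ (Monoid.exponent H : K) ^ Group.rank H :=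
    mod_cast (Nat.cast_dvd_cast (card_dvd_exponent_pow_rank H) : _)
  exact pow_ne_zero _ hexp (zero_dvd_iff.mp (hcard ▸ hdvd))

end Characters

section Weights

variable {K H V : Type*} [Field K] [AddCommGroup V] [Module K V]

/-- `v` is a joint eigenvector of the operators `ρ h`, with eigenvalues given by the linear
character `χ`. -/
def IsWeightVector [Monoid H] (ρ : Representation K H V) (χ : H →* Kˣ) (v : V) : Prop :=
  v ≠ 0 ∧ ∀ h, ρ h v = (χ h : K) • v

/-- The linear character `χ` occurs in `ρ`. -/
def IsWeight [Monoid H] (ρ : Representation K H V) (χ : H →* Kˣ) : Prop :=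
  ∃ v, IsWeightVector ρ χ v

theorem IsWeightVector.linearIndependent [Monoid H] {ρ : Representation K H V} {χ ψ : H →* Kˣ}
    {v w : V} (hv : IsWeightVector ρ χ v) (hw : IsWeightVector ρ ψ w) (hne : χ ≠ ψ) :
    LinearIndependent K ![v, w] := by
  refine (LinearIndependent.pair_iff' hv.1).mpr ?_
  rintro c rfl
  refine hne (MonoidHom.ext fun h => Units.ext (smul_left_injective K hw.1 ?_))
  dsimp only
  rw [← hw.2, map_smul, hv.2, smul_comm]

theorem IsWeightVector.eq_or_eq_of_mem_span_pair [Monoid H] {ρ : Representation K H V}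
    {χ χ' ψ : H →* Kˣ} {v v' w : V} (hv : IsWeightVector ρ χ v) (hv' : IsWeightVector ρ χ' v')
    (hne : χ ≠ χ') (hw : IsWeightVector ρ ψ w) (hmem : w ∈ Submodule.span K {v, v'}) :
    ψ = χ ∨ ψ = χ' := by
  obtain ⟨a, b, rfl⟩ := Submodule.mem_span_pair.mp hmem
  have hcoord (h : H) : a * χ h = ψ h * a ∧ b * χ' h = ψ h * b := by
    refine (hv.linearIndependent hv' hne).eq_of_pair ?_
    have := hw.2 h
    simpa only [map_add, map_smul, hv.2, hv'.2, smul_add, smul_smul] using this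
  obtain rfl | ha := eq_or_ne a 0
  · have hb : b ≠ 0 := fun hb => hw.1 (by simp [hb])
    exact .inr (MonoidHom.ext fun h => Units.ext
      (mul_left_cancel₀ hb ((mul_comm _ _).trans (hcoord h).2.symm)))
  · exact .inl (MonoidHom.ext fun h => Units.ext
      (mul_left_cancel₀ ha ((mul_comm _ _).trans (hcoord h).1.symm)))

/-- The unnormalised projection `∑ₕ χ(h)⁻¹ ρ(h)` onto the vectors of weight `χ`. -/
def weightProj [Group H] [Fintype H] (ρ : Representation K H V) (χ : H →* Kˣ) :
    Module.End K V :=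
  ∑ h, ((χ h)⁻¹ : Kˣ) • ρ h

theorem apply_weightProj [Group H] [Fintype H] (ρ : Representation K H V) (χ : H →* Kˣ) (h : H)
    (v : V) : ρ h (weightProj ρ χ v) = (χ h : K) • weightProj ρ χ v := by
  simp only [weightProj, LinearMap.sum_apply, LinearMap.smul_apply, map_sum, Finset.smul_sum]
  refine Fintype.sum_equiv (Equiv.mulLeft h) _ _ fun g => ?_
  simp only [Units.smul_def, smul_smul, map_smul, Equiv.coe_mulLeft, map_mul, mul_inv,
    Units.val_mul, Units.mul_inv_cancel_left, Module.End.mul_apply]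

theorem sum_weightProj [CommGroup H] [Fintype H] [Fintype (H →* Kˣ)]
    [HasEnoughRootsOfUnity K (Monoid.exponent H)] (ρ : Representation K H V) :
    ∑ χ, weightProj ρ χ = (Nat.card H : K) • 1 := by
  simp only [weightProj]
  rw [Finset.sum_comm, Fintype.sum_eq_single 1]
  · simp [← Nat.card_eq_fintype_card, CommGroup.card_monoidHom_of_hasEnoughRootsOfUnity,
      Nat.cast_smul_eq_nsmul]
  · intro h hh
    simp only [Units.smul_def, ← Finset.sum_smul, ← map_inv]
    rw [sum_char_apply_eq_zero (inv_ne_one.mpr hh), zero_smul]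

theorem exists_isWeightVector_mem [CommGroup H] [Finite H]
    [HasEnoughRootsOfUnity K (Monoid.exponent H)] {ρ : Representation K H V} {W : Submodule K V}
    (hW : W ≠ ⊥) (hstable : ∀ h, ∀ w ∈ W, ρ h w ∈ W) : ∃ χ, ∃ w ∈ W, IsWeightVector ρ χ w := by
  have := Fintype.ofFinite H
  have := Fintype.ofFinite (H →* Kˣ)
  obtain ⟨w, hwW, hw⟩ := W.ne_bot_iff.mp hW
  have hsum : ∑ χ, weightProj ρ χ w ≠ 0 := by
    rw [← LinearMap.sum_apply, sum_weightProj]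
    exact smul_ne_zero natCast_card_ne_zero_of_hasEnoughRootsOfUnity hw
  obtain ⟨χ, -, hχ⟩ := Finset.exists_ne_zero_of_sum_ne_zero hsum
  refine ⟨χ, weightProj ρ χ w, ?_, hχ, fun h => apply_weightProj ρ χ h w⟩
  rw [weightProj, LinearMap.sum_apply]
  exact W.sum_mem fun h _ => W.smul_mem _ (hstable h w hwW)

end Weights

section Conjugation

variable {G M : Type*} [Group G] [Monoid M] {A : Subgroup G} [A.Normal]

/-- The conjugate homomorphism `χ^g : a ↦ χ (g⁻¹ * a * g)`; the inverse makes `χ ↦ χ^g` a left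
action of `G`. -/
def conjHom (g : G) (χ : A →* M) : A →* M :=
  χ.comp (MulAut.conjNormal g⁻¹).toMonoidHom

theorem conjHom_apply (g : G) (χ : A →* M) (a : A) :
    conjHom g χ a = χ (MulAut.conjNormal g⁻¹ a) := rfl

theorem conjHom_conjHom (g h : G) (χ : A →* M) : conjHom g (conjHom h χ) = conjHom (g * h) χ := by
  ext a
  simp [conjHom_apply]

theorem conjHom_of_mem [IsMulCommutative A] {g : G} (hg : g ∈ A) (χ : A →* M) :
    conjHom g χ = χ := by
  ext a
  rw [conjHom_apply]
  congr 1
  ext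
  have := setLike_mul_comm (s := A) hg a.2
  simp [mul_assoc, ← this]

theorem conjHom_conjHom_of_index_eq_two [IsMulCommutative A] (hA : A.index = 2) (g : G)
    (χ : A →* M) : conjHom g (conjHom g χ) = χ := by
  rw [conjHom_conjHom, conjHom_of_mem (Subgroup.mul_self_mem_of_index_two hA g)]

end Conjugation

section IndexTwo

variable {K G V : Type*} [Field K] [Group G] [AddCommGroup V] [Module K V] {A : Subgroup G}
  {τ : G} {ρ ρ' : Representation K G V}

theorem mem_or_exists_mul_eq_of_index_eq_two (hA : A.index = 2) (hτ : τ ∉ A) (g : G) :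
    g ∈ A ∨ ∃ a ∈ A, τ * a = g := by
  refine or_iff_not_imp_left.mpr fun hg => ⟨τ⁻¹ * g, ?_, by group⟩
  rw [Subgroup.mul_mem_iff_of_index_two hA, inv_mem_iff]
  exact iff_of_false hτ hg

theorem IsIrreducibleRep.eq_top_of_index_eq_two (hρ : IsIrreducibleRep ρ) (hA : A.index = 2)
    (hτ : τ ∉ A) {W : Submodule K V} (hW : W ≠ ⊥) (hWA : ∀ a ∈ A, ∀ w ∈ W, ρ a w ∈ W)
    (hWτ : ∀ w ∈ W, ρ τ w ∈ W) : W = ⊤ := by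
  refine (hρ.2 W fun g => Submodule.map_le_iff_le_comap.mpr fun w hw => ?_).resolve_left hW
  rw [Submodule.mem_comap]
  obtain hg | ⟨a, ha, rfl⟩ := mem_or_exists_mul_eq_of_index_eq_two hA hτ g
  · exact hWA g hg w hw
  · rw [map_mul, Module.End.mul_apply]
    exact hWτ _ (hWA a ha w hw)

variable {χ ψ : A →* Kˣ} {v w : V}

theorem IsWeightVector.apply_mul_self (hv : IsWeightVector (ρ.comp A.subtype) χ v)
    (hA : A.index = 2) (g : G) :
    ρ g (ρ g v) = (χ ⟨g * g, Subgroup.mul_self_mem_of_index_two hA g⟩ : K) • v := by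
  rw [← Module.End.mul_apply, ← map_mul]
  exact hv.2 ⟨g * g, _⟩

theorem IsWeightVector.conj [A.Normal] (hv : IsWeightVector (ρ.comp A.subtype) χ v) (g : G) :
    IsWeightVector (ρ.comp A.subtype) (conjHom g χ) (ρ g v) := by
  refine ⟨fun h0 => hv.1 ?_, fun a => ?_⟩
  · simpa [h0] using (ρ.inv_self_apply g v).symm
  · have hconj : (a : G) * g = g * (MulAut.conjNormal g⁻¹ a : A) := by simp [mul_assoc]
    calc ρ a (ρ g v) = ρ g (ρ (MulAut.conjNormal g⁻¹ a : A) v) := by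
          simp only [← Module.End.mul_apply, ← map_mul, hconj]
      _ = (conjHom g χ a : K) • ρ g v := by
          rw [← map_smul]
          exact congrArg (ρ g) (hv.2 (MulAut.conjNormal g⁻¹ a))

theorem IsIrreducibleRep.span_pair_eq_top [A.Normal] (hρ : IsIrreducibleRep ρ) (hA : A.index = 2)
    (hτ : τ ∉ A) (hv : IsWeightVector (ρ.comp A.subtype) χ v) :
    Submodule.span K {v, ρ τ v} = ⊤ := by
  have hv₁ : v ∈ Submodule.span K {v, ρ τ v} := Submodule.subset_span (by simp)
  have hv₂ : ρ τ v ∈ Submodule.span K {v, ρ τ v} := Submodule.subset_span (by simp)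
  have hstable (f : Module.End K V) (h₁ : f v ∈ Submodule.span K {v, ρ τ v})
      (h₂ : f (ρ τ v) ∈ Submodule.span K {v, ρ τ v}) :
      ∀ w ∈ Submodule.span K {v, ρ τ v}, f w ∈ Submodule.span K {v, ρ τ v} := by
    suffices h : Submodule.span K {v, ρ τ v} ≤ (Submodule.span K {v, ρ τ v}).comap f from h
    simp [Submodule.span_le, Set.insert_subset_iff, h₁, h₂]
  refine hρ.eq_top_of_index_eq_two hA hτ (Submodule.ne_bot_iff _ |>.mpr ⟨v, hv₁, hv.1⟩)
    (fun a ha => hstable _ ?_ ?_) (hstable _ hv₂ ?_)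
  · exact hv.2 ⟨a, ha⟩ ▸ Submodule.smul_mem _ _ hv₁
  · exact (hv.conj τ).2 ⟨a, ha⟩ ▸ Submodule.smul_mem _ _ hv₂
  · exact hv.apply_mul_self hA τ ▸ Submodule.smul_mem _ _ hv₁

theorem IsIrreducibleRep.exists_isWeightVector [IsMulCommutative A] [Finite A]
    [HasEnoughRootsOfUnity K (Monoid.exponent A)] (hρ : IsIrreducibleRep ρ) :
    ∃ (χ : A →* Kˣ) (v : V), IsWeightVector (ρ.comp A.subtype) χ v := by
  obtain ⟨χ, v, -, hv⟩ := exists_isWeightVector_mem (ρ := ρ.comp A.subtype) hρ.1.symm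
    fun _ _ _ => Submodule.mem_top
  exact ⟨χ, v, hv⟩

theorem IsIrreducibleRep.rank_le_two [IsMulCommutative A] [Finite A] [A.Normal]
    [HasEnoughRootsOfUnity K (Monoid.exponent A)] (hρ : IsIrreducibleRep ρ) (hA : A.index = 2) :
    Module.rank K V ≤ 2 := by
  classical
  obtain ⟨τ, hτ⟩ : ∃ τ, τ ∉ A := by
    by_contra! h
    simp [(Subgroup.eq_top_iff' A).mpr h] at hA
  obtain ⟨χ, v, hv⟩ := hρ.exists_isWeightVector (A := A)
  rw [← rank_top K V, ← hρ.span_pair_eq_top hA hτ hv, ← Finset.coe_pair]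
  exact (rank_span_finset_le _).trans (mod_cast Finset.card_le_two)

theorem IsIrreducibleRep.linearIndependent_pair [A.Normal] (hρ : IsIrreducibleRep ρ)
    (hA : A.index = 2) (hτ : τ ∉ A) (hV : Module.finrank K V = 2)
    (hv : IsWeightVector (ρ.comp A.subtype) χ v) : LinearIndependent K ![v, ρ τ v] :=
  linearIndependent_of_top_le_span_of_card_eq_finrank
    (by rw [Matrix.range_cons_cons_empty, hρ.span_pair_eq_top hA hτ hv]) (by simp [hV])

/- If `χ^τ = χ`, then `v + τ v` is again a weight vector, but it is fixed by the involution `τ`. -/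
theorem IsIrreducibleRep.conjHom_ne [A.Normal] (hρ : IsIrreducibleRep ρ) (hA : A.index = 2)
    (hτ : τ ∉ A) (hττ : τ * τ = 1) (hV : Module.finrank K V = 2)
    (hχ : IsWeight (ρ.comp A.subtype) χ) : conjHom τ χ ≠ χ := by
  intro heq
  obtain ⟨v, hv⟩ := hχ
  have hu : IsWeightVector (ρ.comp A.subtype) χ (v + ρ τ v) := by
    refine ⟨fun h0 => one_ne_zero (LinearIndependent.pair_iff.mp
      (hρ.linearIndependent_pair hA hτ hV hv) 1 1 (by simpa using h0)).1, fun a => ?_⟩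
    rw [map_add, hv.2, (hv.conj τ).2, heq, smul_add]
  refine (LinearIndependent.pair_iff' hu.1).mp (hρ.linearIndependent_pair hA hτ hV hu) 1 ?_
  have hττv : ρ τ (ρ τ v) = v := by
    rw [← Module.End.mul_apply, ← map_mul, hττ, map_one, Module.End.one_apply]
  rw [one_smul, map_add, hττv, add_comm]

theorem IsWeightVector.linearIndependent_conj [A.Normal] (hχ : conjHom τ χ ≠ χ)
    (hv : IsWeightVector (ρ.comp A.subtype) χ v) : LinearIndependent K ![v, ρ τ v] :=
  hv.linearIndependent (hv.conj τ) hχ.symm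

theorem IsWeightVector.span_pair_eq_top [A.Normal] (hV : Module.finrank K V = 2)
    (hχ : conjHom τ χ ≠ χ) (hv : IsWeightVector (ρ.comp A.subtype) χ v) :
    Submodule.span K {v, ρ τ v} = ⊤ := by
  rw [← Matrix.range_cons_cons_empty v (ρ τ v) ![]]
  exact (hv.linearIndependent_conj hχ).span_eq_top_of_card_eq_finrank (by simp [hV])

theorem IsWeightVector.eq_or_eq_conjHom [A.Normal] (hV : Module.finrank K V = 2)
    (hχ : conjHom τ χ ≠ χ) (hv : IsWeightVector (ρ.comp A.subtype) χ v)
    (hw : IsWeightVector (ρ.comp A.subtype) ψ w) : ψ = χ ∨ ψ = conjHom τ χ :=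
  hv.eq_or_eq_of_mem_span_pair (hv.conj τ) hχ.symm hw
    (hv.span_pair_eq_top hV hχ ▸ Submodule.mem_top)

theorem isIrreducibleRep_of_conjHom_ne [IsMulCommutative A] [Finite A] [A.Normal]
    [HasEnoughRootsOfUnity K (Monoid.exponent A)] (hA : A.index = 2)
    (hV : Module.finrank K V = 2) (hχ : conjHom τ χ ≠ χ) (h : IsWeight (ρ.comp A.subtype) χ) :
    IsIrreducibleRep ρ := by
  have : Nontrivial V := Module.nontrivial_of_finrank_eq_succ hV
  obtain ⟨v, hv⟩ := h
  refine ⟨bot_ne_top, fun W hW => or_iff_not_imp_left.mpr fun hWbot => top_le_iff.mp ?_⟩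
  obtain ⟨ψ, w, hwW, hw⟩ := exists_isWeightVector_mem (ρ := ρ.comp A.subtype) hWbot
    fun a w hw => hW a (Submodule.mem_map_of_mem hw)
  have hψ : conjHom τ ψ ≠ ψ := by
    obtain rfl | rfl := hv.eq_or_eq_conjHom hV hχ hw
    · exact hχ
    · rw [conjHom_conjHom_of_index_eq_two hA]
      exact hχ.symm
  rw [← hw.span_pair_eq_top hV hψ, Submodule.span_le, Set.insert_subset_iff,
    Set.singleton_subset_iff]
  exact ⟨hwW, hW τ (Submodule.mem_map_of_mem hwW)⟩

theorem repIso_of_isWeight [A.Normal] (hA : A.index = 2) (hτ : τ ∉ A)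
    (hV : Module.finrank K V = 2) (hχ : conjHom τ χ ≠ χ) (h : IsWeight (ρ.comp A.subtype) χ)
    (h' : IsWeight (ρ'.comp A.subtype) χ) : RepIso ρ ρ' := by
  obtain ⟨v, hv⟩ := h
  obtain ⟨v', hv'⟩ := h'
  let b := basisOfLinearIndependentOfCardEqFinrank (hv.linearIndependent_conj hχ) (by simp [hV])
  let b' := basisOfLinearIndependentOfCardEqFinrank (hv'.linearIndependent_conj hχ) (by simp [hV])
  let T := b.equiv b' (Equiv.refl _)
  have hTv : T v = v' := by simpa [b, b'] using b.equiv_apply 0 b' (Equiv.refl _)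
  have hTτv : T (ρ τ v) = ρ' τ v' := by simpa [b, b'] using b.equiv_apply 1 b' (Equiv.refl _)
  have hbasis {g : G} (h₁ : T (ρ g v) = ρ' g v') (h₂ : T (ρ g (ρ τ v)) = ρ' g (ρ' τ v'))
      (w : V) : T (ρ g w) = ρ' g (T w) := by
    refine LinearMap.congr_fun (f := T.toLinearMap ∘ₗ ρ g) (g := ρ' g ∘ₗ T.toLinearMap)
      (b.ext fun i => ?_) w
    fin_cases i
    · simpa [b, hTv] using h₁
    · simpa [b, hTτv] using h₂
  have hTweight {ψ : A →* Kˣ} {u u' : V} (hu : IsWeightVector (ρ.comp A.subtype) ψ u)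
      (hu' : IsWeightVector (ρ'.comp A.subtype) ψ u') (hTu : T u = u') (a : A) :
      T (ρ a u) = ρ' a u' := by
    suffices h : T (ρ.comp A.subtype a u) = ρ'.comp A.subtype a u' from h
    rw [hu.2, hu'.2, map_smul, hTu]
  have hTA (a : A) : ∀ w, T (ρ a w) = ρ' a (T w) :=
    hbasis (hTweight hv hv' hTv a) (hTweight (hv.conj τ) (hv'.conj τ) hTτv a)
  have hTτ (w : V) : T (ρ τ w) = ρ' τ (T w) :=
    hbasis hTτv (by rw [hv.apply_mul_self hA, hv'.apply_mul_self hA, map_smul, hTv]) w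
  refine ⟨T, fun g w => ?_⟩
  obtain hg | ⟨a, ha, rfl⟩ := mem_or_exists_mul_eq_of_index_eq_two hA hτ g
  · exact hTA ⟨g, hg⟩ w
  · rw [map_mul, map_mul, Module.End.mul_apply, Module.End.mul_apply, hTτ, hTA ⟨a, ha⟩]

end IndexTwo

section Induced

variable {K G ι : Type*} [Field K] [Group G] {A : Subgroup G}

open scoped Classical in
/-- The extension by zero to `G` of a linear character `χ` of the subgroup `A`. -/
noncomputable def zeroExtend (χ : A →* Kˣ) (g : G) : K :=
  if h : g ∈ A then χ ⟨g, h⟩ else 0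

theorem zeroExtend_of_mem (χ : A →* Kˣ) {g : G} (hg : g ∈ A) :
    zeroExtend χ g = χ ⟨g, hg⟩ := dif_pos hg

theorem zeroExtend_of_notMem (χ : A →* Kˣ) {g : G} (hg : g ∉ A) : zeroExtend χ g = 0 :=
  dif_neg hg

theorem zeroExtend_one (χ : A →* Kˣ) : zeroExtend χ 1 = 1 :=
  (zeroExtend_of_mem χ A.one_mem).trans (congrArg Units.val (map_one χ))

theorem zeroExtend_mul_of_mem (χ : A →* Kˣ) (g : G) {h : G} (hh : h ∈ A) :
    zeroExtend χ (g * h) = zeroExtend χ g * zeroExtend χ h := by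
  by_cases hg : g ∈ A
  · rw [zeroExtend_of_mem χ hg, zeroExtend_of_mem χ hh, zeroExtend_of_mem χ (mul_mem hg hh),
      ← Units.val_mul, ← map_mul]
    rfl
  · rw [zeroExtend_of_notMem χ hg, zero_mul,
      zeroExtend_of_notMem χ (mt (Subgroup.mul_mem_cancel_right A hh).mp hg)]

variable [Fintype ι] [DecidableEq ι] {r : ι → G}

/-- The representation induced by the linear character `χ` of `A`, in matrix form with respect to
the representatives `r` of the left cosets of `A`. -/
noncomputable def inducedRep (χ : A →* Kˣ) (hr : ∀ g, ∃! i, (r i)⁻¹ * g ∈ A) :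
    Representation K G (ι → K) :=
  (Matrix.toLinAlgEquiv' : Matrix ι ι K ≃ₐ[K] _).toMonoidHom.comp
    { toFun g := .of fun i j => zeroExtend χ ((r i)⁻¹ * g * r j)
      map_one' := by
        ext i j
        obtain rfl | hij := eq_or_ne i j
        · simp [zeroExtend_one]
        · rw [Matrix.of_apply, Matrix.one_apply_ne hij, mul_one]
          exact zeroExtend_of_notMem χ fun h => hij ((hr (r j)).unique h (by simp))
      map_mul' g h := by
        ext i k
        obtain ⟨j, hj, huniq⟩ := hr (h * r k)
        rw [Matrix.mul_apply, Fintype.sum_eq_single j]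
        · rw [← mul_assoc] at hj
          rw [Matrix.of_apply, Matrix.of_apply, Matrix.of_apply, ← zeroExtend_mul_of_mem χ _ hj]
          congr 1
          group
        · intro l hl
          rw [Matrix.of_apply, Matrix.of_apply (i := l), zeroExtend_of_notMem χ (g := _ * h * _),
            mul_zero]
          exact fun h' => hl (huniq l (by rwa [mul_assoc] at h')) }

theorem isWeight_inducedRep (χ : A →* Kˣ) (hr : ∀ g, ∃! i, (r i)⁻¹ * g ∈ A) {i : ι}
    (hi : r i = 1) : IsWeight ((inducedRep χ hr).comp A.subtype) χ := by
  refine ⟨Pi.single i 1, by simp, fun a => funext fun j => ?_⟩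
  suffices h : zeroExtend χ ((r j)⁻¹ * a) = χ a * (Pi.single i 1 : ι → K) j by
    simpa [inducedRep, hi] using h
  obtain rfl | hij := eq_or_ne j i
  · simp [hi, zeroExtend_of_mem]
  · rw [Pi.single_eq_of_ne hij, mul_zero]
    exact zeroExtend_of_notMem χ fun h => hij ((hr a).unique h (by simp [hi]))

theorem existsUnique_inv_mul_mem_of_index_eq_two (hA : A.index = 2) {τ : G} (hτ : τ ∉ A) (g : G) :
    ∃! i, (![1, τ] i)⁻¹ * g ∈ A := by
  have hτg : τ⁻¹ * g ∈ A ↔ g ∉ A := by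
    rw [Subgroup.mul_mem_iff_of_index_two hA, inv_mem_iff, iff_false_left hτ]
  by_cases hg : g ∈ A
  · exact ⟨0, by simpa, fun i hi => by fin_cases i <;> simp_all⟩
  · exact ⟨1, by simpa [hτg], fun i hi => by fin_cases i <;> simp_all⟩

end Induced

/-- Isomorphism classes of irreducible representations of `G` on the space `V`. -/
abbrev IrreducibleClasses (K G V : Type*) [Field K] [Monoid G] [AddCommGroup V] [Module K V] :
    Type _ :=
  Quot fun ρ₁ ρ₂ : {ρ : Representation K G V // IsIrreducibleRep ρ} => RepIso ρ₁.1 ρ₂.1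

namespace RepIso

variable {K G V : Type*} [Field K] [AddCommGroup V] [Module K V]

theorem refl [Monoid G] (ρ : Representation K G V) : RepIso ρ ρ :=
  ⟨.refl K V, fun _ _ => rfl⟩

theorem symm [Monoid G] {ρ ρ' : Representation K G V} (h : RepIso ρ ρ') : RepIso ρ' ρ := by
  obtain ⟨T, hT⟩ := h
  exact ⟨T.symm, fun g w => T.injective (by simp [hT])⟩

theorem trans [Monoid G] {ρ ρ' ρ'' : Representation K G V} (h : RepIso ρ ρ')
    (h' : RepIso ρ' ρ'') : RepIso ρ ρ'' := by
  obtain ⟨T, hT⟩ := h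
  obtain ⟨S, hS⟩ := h'
  exact ⟨T.trans S, fun g w => by simp [hT, hS]⟩

theorem isWeight [Group G] {A : Subgroup G} {χ : A →* Kˣ} {ρ ρ' : Representation K G V}
    (h : RepIso ρ ρ') (hχ : IsWeight (ρ.comp A.subtype) χ) : IsWeight (ρ'.comp A.subtype) χ := by
  obtain ⟨T, hT⟩ := h
  obtain ⟨v, hv⟩ := hχ
  exact ⟨T v, by simpa using hv.1, fun a =>
    (hT a v).symm.trans ((congrArg T (hv.2 a)).trans (map_smul T _ v))⟩

end RepIso

section Counting

variable {K G : Type*} [Field K] [Group G] {A : Subgroup G} [A.Normal] [IsMulCommutative A]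
  [Finite A] [HasEnoughRootsOfUnity K (Monoid.exponent A)] {τ : G}

/-- The class of the representation induced by a linear character of `A` that differs from its
`τ`-conjugate. -/
noncomputable def inducedClass (hA : A.index = 2) (hτ : τ ∉ A)
    (χ : {χ : A →* Kˣ // conjHom τ χ ≠ χ}) :
    IrreducibleClasses K G (Fin 2 → K) :=
  Quot.mk _ ⟨inducedRep χ.1 (existsUnique_inv_mul_mem_of_index_eq_two hA hτ),
    isIrreducibleRep_of_conjHom_ne hA (by simp) χ.2 (isWeight_inducedRep χ.1 _ (i := 0) rfl)⟩

theorem inducedClass_eq_mk_iff (hA : A.index = 2) (hτ : τ ∉ A)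
    {χ : {χ : A →* Kˣ // conjHom τ χ ≠ χ}}
    {ρ : {ρ : Representation K G (Fin 2 → K) // IsIrreducibleRep ρ}} :
    inducedClass hA hτ χ = Quot.mk _ ρ ↔ IsWeight (ρ.1.comp A.subtype) χ.1 := by
  have hequiv : Equivalence fun ρ₁ ρ₂ : {ρ : Representation K G (Fin 2 → K) //
      IsIrreducibleRep ρ} => RepIso ρ₁.1 ρ₂.1 :=
    ⟨fun ρ => .refl ρ.1, RepIso.symm, RepIso.trans⟩
  have hχ := isWeight_inducedRep χ.1 (existsUnique_inv_mul_mem_of_index_eq_two hA hτ) (i := 0) rfl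
  rw [inducedClass, hequiv.quot_mk_eq_iff]
  exact ⟨fun h => h.isWeight hχ, repIso_of_isWeight hA hτ (by simp) χ.2 hχ⟩

theorem inducedClass_surjective (hA : A.index = 2) (hτ : τ ∉ A) (hττ : τ * τ = 1) :
    Function.Surjective (inducedClass (K := K) hA hτ) := by
  rintro ⟨ρ⟩
  obtain ⟨χ, hχ⟩ := ρ.2.exists_isWeightVector (A := A)
  exact ⟨⟨χ, ρ.2.conjHom_ne hA hτ hττ (by simp) hχ⟩, (inducedClass_eq_mk_iff hA hτ).mpr hχ⟩

theorem inducedClass_eq_iff (hA : A.index = 2) (hτ : τ ∉ A)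
    {χ ψ : {χ : A →* Kˣ // conjHom τ χ ≠ χ}} :
    inducedClass hA hτ ψ = inducedClass hA hτ χ ↔ ψ.1 = χ.1 ∨ ψ.1 = conjHom τ χ.1 := by
  obtain ⟨v, hv⟩ :=
    isWeight_inducedRep χ.1 (existsUnique_inv_mul_mem_of_index_eq_two hA hτ) (i := 0) rfl
  conv_lhs => rhs; rw [inducedClass]
  rw [inducedClass_eq_mk_iff]
  constructor
  · rintro ⟨w, hw⟩
    exact hv.eq_or_eq_conjHom (by simp) χ.2 hw
  · rintro (h | h) <;> rw [h]
    exacts [⟨v, hv⟩, ⟨_, hv.conj τ⟩]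

theorem card_inducedClass_fiber (hA : A.index = 2) (hτ : τ ∉ A) (hττ : τ * τ = 1)
    (c : IrreducibleClasses K G (Fin 2 → K)) :
    Nat.card {χ // inducedClass (K := K) hA hτ χ = c} = 2 := by
  obtain ⟨χ, rfl⟩ := inducedClass_surjective hA hτ hττ c
  have hτχ : conjHom τ (conjHom τ χ.1) ≠ conjHom τ χ.1 := by
    rw [conjHom_conjHom_of_index_eq_two hA]
    exact χ.2.symm
  have hfiber : {ψ | inducedClass hA hτ ψ = inducedClass hA hτ χ} = {χ, ⟨_, hτχ⟩} := by
    ext ψ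
    simp [inducedClass_eq_iff, Subtype.ext_iff]
  rw [← Set.coe_ofPred, Nat.card_coe_set_eq, hfiber, Set.ncard_pair]
  exact fun h => χ.2 (congrArg Subtype.val h).symm

theorem two_mul_card_irreducibleClasses (hA : A.index = 2) (hτ : τ ∉ A) (hττ : τ * τ = 1) :
    2 * Nat.card (IrreducibleClasses K G (Fin 2 → K)) =
      Nat.card A - Nat.card {χ : A →* Kˣ // conjHom τ χ = χ} := by
  have hfinite : Finite (IrreducibleClasses K G (Fin 2 → K)) :=
    .of_surjective _ (inducedClass_surjective hA hτ hττ)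
  have hmoved : Nat.card {χ : A →* Kˣ // conjHom τ χ ≠ χ} =
      2 * Nat.card (IrreducibleClasses K G (Fin 2 → K)) := by
    have := Fintype.ofFinite (IrreducibleClasses K G (Fin 2 → K))
    rw [← Nat.card_congr (Equiv.sigmaFiberEquiv (inducedClass (K := K) hA hτ)), Nat.card_sigma]
    simp [card_inducedClass_fiber hA hτ hττ, mul_comm]
  classical
  rw [← CommGroup.card_monoidHom_of_hasEnoughRootsOfUnity A K, ← hmoved,
    ← Nat.card_congr (Equiv.sumCompl fun χ : A →* Kˣ => conjHom τ χ = χ), Nat.card_sum,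
    Nat.add_sub_cancel_left]

end Counting

section Restriction

theorem exists_eq_pow_mul_pow_of_range_eq_of_ker_eq {G H : Type*} [Group G] [Group H] {f : G →* H}
    {x y : G} (hrange : f.range = Subgroup.zpowers (f x)) (hker : f.ker = Subgroup.zpowers y)
    (hx : IsOfFinOrder (f x)) (hy : IsOfFinOrder y) (g : G) : ∃ i j : ℕ, g = x ^ i * y ^ j := by
  obtain ⟨i, hi⟩ := hx.mem_powers_iff_mem_zpowers.mpr (hrange.le ⟨g, rfl⟩)
  have hmem : (x ^ i)⁻¹ * g ∈ f.ker := by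
    rw [MonoidHom.mem_ker, map_mul, map_inv, map_pow]
    exact inv_mul_eq_one.mpr hi
  obtain ⟨j, hj⟩ := hy.mem_powers_iff_mem_zpowers.mpr (hker.le hmem)
  exact ⟨i, j, (mul_eq_of_eq_inv_mul hj).symm⟩

variable {G M : Type*} [Group G] {A : Subgroup G} {τ : G}

theorem conjHom_domRestrict [A.Normal] [CommGroup M] (g : G) (χ : G →* M) :
    conjHom g (χ.domRestrict A) = χ.domRestrict A := by
  ext a
  simp [conjHom_apply]

theorem eq_of_domRestrict_eq_of_index_eq_two [MulOneClass M] (hA : A.index = 2) (hτ : τ ∉ A)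
    {χ ψ : G →* M} (hres : χ.domRestrict A = ψ.domRestrict A) (hχτ : χ τ = ψ τ) : χ = ψ := by
  have hχA (a : G) (ha : a ∈ A) : χ a = ψ a := DFunLike.congr_fun hres ⟨a, ha⟩
  ext g
  obtain hg | ⟨a, ha, rfl⟩ := mem_or_exists_mul_eq_of_index_eq_two hA hτ g
  · exact hχA g hg
  · rw [map_mul, map_mul, hχτ, hχA a ha]

theorem orderOf_domRestrict_of_index_eq_two [CommGroup M] (hA : A.index = 2) (hτ : τ ∉ A)
    {χ : G →* M} (hχτ : χ τ = 1) : orderOf (χ.domRestrict A) = orderOf χ := by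
  refine orderOf_eq_orderOf_iff.mpr fun n => ⟨fun h => ?_, fun h => ?_⟩
  · exact eq_of_domRestrict_eq_of_index_eq_two hA hτ h (by simp [hχτ])
  · exact congrArg (MonoidHom.domRestrictHom A M) h

theorem orderOf_eq_two_of_domRestrict_eq_one {K : Type*} [Field K] [NeZero (2 : K)]
    (hA : A.index = 2) (hτ : τ ∉ A) {ε : G →* Kˣ} (hεA : ε.domRestrict A = 1) (hετ : ε τ = -1) :
    orderOf ε = 2 := by
  refine orderOf_eq_prime (eq_of_domRestrict_eq_of_index_eq_two hA hτ ?_ ?_) ?_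
  · ext a
    simp [show ε a = 1 from DFunLike.congr_fun hεA a]
  · simp [hετ]
  · rintro rfl
    have h2 : (1 : K) = -1 := Units.ext_iff.mp hετ
    exact two_ne_zero (α := K) (by linear_combination h2)

theorem ker_domRestrictHom_of_index_eq_two {K : Type*} [Field K] (hA : A.index = 2) (hτ : τ ∉ A)
    (hττ : τ * τ = 1) {ε : G →* Kˣ} (hεA : ε.domRestrict A = 1) (hετ : ε τ = -1) :
    (MonoidHom.domRestrictHom A Kˣ).ker = Subgroup.zpowers ε := by
  refine le_antisymm (fun χ hχ => ?_) (Subgroup.zpowers_le.mpr hεA)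
  have hsq : χ τ * χ τ = 1 := by rw [← map_mul, hττ, map_one]
  obtain h1 | h1 := mul_self_eq_one_iff.mp (Units.ext_iff.mp hsq)
  · have : χ = 1 := eq_of_domRestrict_eq_of_index_eq_two hA hτ hχ (Units.ext h1)
    exact this ▸ one_mem _
  · have : χ = ε := eq_of_domRestrict_eq_of_index_eq_two hA hτ (hεA ▸ hχ)
      (Units.ext (by simpa [hετ] using h1))
    exact this ▸ Subgroup.mem_zpowers ε

end Restriction

section Imprimitive

variable {K : Type*} [Field K] {ζ : K} {hζ0 : ζ ≠ 0} {d e : ℕ}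

theorem coe_Dgl (a b : ℤ) :
    (Dgl ζ hζ0 a b : Matrix (Fin 2) (Fin 2) K) = !![ζ ^ a, 0; 0, ζ ^ b] :=
  Matrix.diagonal_fin_two _

theorem coe_tauGL : (tauGL K : Matrix (Fin 2) (Fin 2) K) = !![0, 1; 1, 0] := rfl

theorem Dgl_mul (a b a' b' : ℤ) :
    Dgl ζ hζ0 a b * Dgl ζ hζ0 a' b' = Dgl ζ hζ0 (a + a') (b + b') := by
  apply Units.ext
  rw [Units.val_mul, coe_Dgl, coe_Dgl, coe_Dgl]
  simp [zpow_add₀ hζ0]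

theorem Dgl_eq_one_iff {m : ℕ} (hζ : IsPrimitiveRoot ζ m) {a b : ℤ} :
    Dgl ζ hζ0 a b = 1 ↔ (m : ℤ) ∣ a ∧ (m : ℤ) ∣ b := by
  rw [Units.ext_iff, coe_Dgl, Units.val_one, Matrix.one_fin_two]
  simp [← hζ.zpow_eq_one_iff_dvd]

theorem tauG_mul_tauG : tauG ζ hζ0 e * tauG ζ hζ0 e = 1 := by
  refine Subtype.ext (Units.ext ?_)
  change (tauGL K : Matrix (Fin 2) (Fin 2) K) * tauGL K = 1
  rw [coe_tauGL, Matrix.one_fin_two]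
  simp

theorem DG_mul_tauG (a b : ℤ) (h : (e : ℤ) ∣ a + b) :
    DG ζ hζ0 e a b h * tauG ζ hζ0 e = tauG ζ hζ0 e * DG ζ hζ0 e b a (add_comm a b ▸ h) := by
  refine Subtype.ext (Units.ext ?_)
  change (Dgl ζ hζ0 a b : Matrix (Fin 2) (Fin 2) K) * tauGL K = tauGL K * Dgl ζ hζ0 b a
  rw [coe_tauGL, coe_Dgl, coe_Dgl]
  simp

variable (hζ0 e) in
/-- The parametrisation `(i, j) ↦ D(i, ej - i)` of the diagonal subgroup of `G(m,e,2)`: the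
condition `e ∣ a + b` on `D(a,b)` is solved by `a = i`, `b = ej - i`. -/
def diagHom : Multiplicative (ℤ × ℤ) →* ↥(Gme2 ζ hζ0 e) where
  toFun p := DG ζ hζ0 e p.toAdd.1 (e * p.toAdd.2 - p.toAdd.1) (by simp)
  map_one' := Subtype.ext (Units.ext (by simp [DG, coe_Dgl, Matrix.one_fin_two]))
  map_mul' p q := Subtype.ext <| by
    simp only [DG, Subgroup.coe_mul, Dgl_mul, toAdd_mul, Prod.fst_add, Prod.snd_add]
    congr 1
    ring

variable (hζ0 e) in
/-- The diagonal subgroup of `G(m,e,2)`. -/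
abbrev diagSubgroup : Subgroup ↥(Gme2 ζ hζ0 e) := (diagHom hζ0 e).range

theorem diagHom_ofAdd (i j : ℤ) :
    diagHom hζ0 e (.ofAdd (i, j)) = DG ζ hζ0 e i (e * j - i) (by simp) := rfl

variable (hζ0 e) in
/-- The matrix `D(i, ej - i)` as an element of the diagonal subgroup. -/
abbrev diagElement (i j : ℤ) : diagSubgroup hζ0 e := (diagHom hζ0 e).rangeRestrict (.ofAdd (i, j))

theorem DG_mem_diagSubgroup (a b : ℤ) (h : (e : ℤ) ∣ a + b) :
    DG ζ hζ0 e a b h ∈ diagSubgroup hζ0 e := by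
  obtain ⟨j, hj⟩ := h
  obtain rfl : b = e * j - a := by linarith
  exact ⟨.ofAdd (a, j), rfl⟩

theorem tauG_notMem_diagSubgroup : tauG ζ hζ0 e ∉ diagSubgroup hζ0 e := by
  rintro ⟨p, hp⟩
  have h01 := congrFun₂ (congrArg (fun g => (g.1 : Matrix (Fin 2) (Fin 2) K)) hp) 0 1
  simp [diagHom, DG, tauG, coe_Dgl, coe_tauGL] at h01

theorem diagHom_eq_one_iff (he : e ≠ 0) (hζ : IsPrimitiveRoot ζ (d * e))
    (p : Multiplicative (ℤ × ℤ)) :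
    diagHom hζ0 e p = 1 ↔ ((d * e : ℕ) : ℤ) ∣ p.toAdd.1 ∧ (d : ℤ) ∣ p.toAdd.2 := by
  have hdvd : ((d * e : ℕ) : ℤ) ∣ e * p.toAdd.2 ↔ (d : ℤ) ∣ p.toAdd.2 := by
    rw [mul_comm d e, Nat.cast_mul]
    exact mul_dvd_mul_iff_left (mod_cast he)
  rw [Subtype.ext_iff]
  refine (Dgl_eq_one_iff (hζ0 := hζ0) hζ).trans ?_
  rw [← hdvd]
  exact and_congr_right fun h => dvd_sub_left h

theorem ker_diagHom (he : e ≠ 0) (hζ : IsPrimitiveRoot ζ (d * e)) :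
    (diagHom hζ0 e).ker =
      ((AddSubgroup.zmultiples ((d * e : ℕ) : ℤ)).prod (.zmultiples (d : ℤ))).toSubgroup := by
  ext p
  rw [MonoidHom.mem_ker, diagHom_eq_one_iff he hζ, Multiplicative.mem_toSubgroup,
    AddSubgroup.mem_prod, Int.mem_zmultiples_iff, Int.mem_zmultiples_iff]

theorem card_diagSubgroup (he : e ≠ 0) (hζ : IsPrimitiveRoot ζ (d * e)) :
    Nat.card (diagSubgroup hζ0 e) = d * e * d := by
  rw [← Subgroup.index_ker, ker_diagHom he hζ, AddSubgroup.index_toSubgroup,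
    AddSubgroup.index_prod, Int.index_zmultiples, Int.index_zmultiples, Int.natAbs_natCast,
    Int.natAbs_natCast]

theorem closure_insert_tauG_diagSubgroup :
    Subgroup.closure (insert (tauG ζ hζ0 e) (diagSubgroup hζ0 e : Set (Gme2 ζ hζ0 e))) = ⊤ := by
  refine top_le_iff.mp (Subgroup.closure_closure_coe_preimage.ge.trans (Subgroup.closure_mono ?_))
  rintro ⟨g, hg⟩ (rfl | ⟨a, b, h, rfl⟩)
  · exact Set.mem_insert _ _
  · exact Set.mem_insert_of_mem _ (DG_mem_diagSubgroup a b h)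

theorem mul_mul_tauG_mem_diagSubgroup {g a : ↥(Gme2 ζ hζ0 e)} (ha : a ∈ diagSubgroup hζ0 e)
    (hg : g * tauG ζ hζ0 e ∈ diagSubgroup hζ0 e) : g * a * tauG ζ hζ0 e ∈ diagSubgroup hζ0 e := by
  obtain ⟨p, rfl⟩ := ha
  rw [mul_assoc, ← ofAdd_toAdd p, diagHom_ofAdd, DG_mul_tauG, ← mul_assoc]
  exact mul_mem hg (DG_mem_diagSubgroup ..)

theorem mul_tauG_mem_or_mem_diagSubgroup (g : ↥(Gme2 ζ hζ0 e)) :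
    g * tauG ζ hζ0 e ∈ diagSubgroup hζ0 e ∨ g ∈ diagSubgroup hζ0 e := by
  have hτ {g : ↥(Gme2 ζ hζ0 e)} (ih : g * tauG ζ hζ0 e ∈ diagSubgroup hζ0 e ∨
      g ∈ diagSubgroup hζ0 e) : g * tauG ζ hζ0 e * tauG ζ hζ0 e ∈ diagSubgroup hζ0 e ∨
      g * tauG ζ hζ0 e ∈ diagSubgroup hζ0 e := by
    rw [mul_assoc _ (tauG ζ hζ0 e), tauG_mul_tauG, mul_one]
    exact ih.symm
  have hA {g a : ↥(Gme2 ζ hζ0 e)} (ha : a ∈ diagSubgroup hζ0 e) :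
      g * tauG ζ hζ0 e ∈ diagSubgroup hζ0 e ∨ g ∈ diagSubgroup hζ0 e →
        g * a * tauG ζ hζ0 e ∈ diagSubgroup hζ0 e ∨ g * a ∈ diagSubgroup hζ0 e :=
    Or.imp (mul_mul_tauG_mem_diagSubgroup ha) (mul_mem · ha)
  have hg : g ∈ Subgroup.closure _ := closure_insert_tauG_diagSubgroup.ge (Subgroup.mem_top g)
  induction hg using Subgroup.closure_induction_right with
  | one => exact .inr (one_mem _)
  | mul_right x _ y hy ih =>
    obtain rfl | hy := hy
    exacts [hτ ih, hA hy ih]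
  | mul_inv_cancel x _ y hy ih =>
    obtain rfl | hy := hy
    · rw [inv_eq_of_mul_eq_one_right (tauG_mul_tauG (hζ0 := hζ0) (e := e))]
      exact hτ ih
    · exact hA (inv_mem hy) ih

theorem index_diagSubgroup : (diagSubgroup hζ0 e).index = 2 :=
  Subgroup.index_eq_two_iff_exists_notMem_and.mpr
    ⟨tauG ζ hζ0 e, tauG_notMem_diagSubgroup, mul_tauG_mem_or_mem_diagSubgroup⟩

instance normal_diagSubgroup : (diagSubgroup hζ0 e).Normal :=
  Subgroup.normal_of_index_eq_two index_diagSubgroup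

theorem finite_diagSubgroup [NeZero d] (he : e ≠ 0) (hζ : IsPrimitiveRoot ζ (d * e)) :
    Finite (diagSubgroup hζ0 e) :=
  Nat.finite_of_card_ne_zero <| by
    rw [card_diagSubgroup he hζ]
    exact mul_ne_zero (mul_ne_zero (NeZero.ne d) he) (NeZero.ne d)

theorem hasEnoughRootsOfUnity_exponent_diagSubgroup [NeZero d] (he : e ≠ 0)
    (hζ : IsPrimitiveRoot ζ (d * e)) :
    HasEnoughRootsOfUnity K (Monoid.exponent (diagSubgroup hζ0 e)) := by
  have : NeZero (d * e) := ⟨mul_ne_zero (NeZero.ne d) he⟩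
  have : HasEnoughRootsOfUnity K (d * e) := ⟨⟨ζ, hζ⟩, rootsOfUnity.isCyclic K _⟩
  have hdvd : Monoid.exponent (diagSubgroup hζ0 e) ∣ d * e := by
    refine Monoid.exponent_dvd_of_forall_pow_eq_one ?_
    rintro ⟨_, p, rfl⟩
    ext1
    rw [Subgroup.coe_pow, ← map_pow, Subgroup.coe_one,
      diagHom_eq_one_iff he hζ]
    exact ⟨by simp, by simp [mul_assoc]⟩
  exact .of_dvd K hdvd

theorem diagSubgroup_hom_ext {M : Type*} [Group M] {χ ψ : diagSubgroup hζ0 e →* M}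
    (h₁ : χ (diagElement hζ0 e 1 0) = ψ (diagElement hζ0 e 1 0))
    (h₂ : χ (diagElement hζ0 e 0 1) = ψ (diagElement hζ0 e 0 1)) : χ = ψ := by
  refine (MonoidHom.cancel_right (diagHom hζ0 e).rangeRestrict_surjective).mp
    (MonoidHom.ext fun p => ?_)
  have hp : p = .ofAdd (1, 0) ^ p.toAdd.1 * .ofAdd (0, 1) ^ p.toAdd.2 :=
    Multiplicative.toAdd.injective (by simp)
  rw [hp]
  simp only [MonoidHom.comp_apply, map_mul, map_zpow, h₁, h₂]

theorem conjHom_tauG_diagElement {M : Type*} [Monoid M] (ψ : diagSubgroup hζ0 e →* M) (i j : ℤ) :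
    conjHom (tauG ζ hζ0 e) ψ (diagElement hζ0 e i j) = ψ (diagElement hζ0 e (e * j - i) j) := by
  rw [conjHom_apply]
  refine congrArg ψ (Subtype.ext ?_)
  rw [MulAut.conjNormal_apply, inv_inv, MonoidHom.coe_rangeRestrict, MonoidHom.coe_rangeRestrict,
    mul_assoc, diagHom_ofAdd, DG_mul_tauG, inv_mul_cancel_left, diagHom_ofAdd]
  congr 1
  ring

theorem apply_diagElement_one_zero {M : Type*} [Group M] (he : Odd e)
    {ψ : diagSubgroup hζ0 e →* M} (hψ : conjHom (tauG ζ hζ0 e) ψ = ψ) :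
    ψ (diagElement hζ0 e 1 0) = 1 := by
  obtain ⟨k, rfl⟩ := he
  have h := DFunLike.congr_fun hψ (diagElement hζ0 _ k 1)
  have hk : ((2 * k + 1 : ℕ) : ℤ) * 1 - k = 1 + k := by
    push_cast
    ring
  have hmul : diagElement hζ0 (2 * k + 1) (1 + k) 1 =
      diagElement hζ0 _ 1 0 * diagElement hζ0 _ k 1 := by
    rw [← map_mul, ← ofAdd_add, Prod.mk_add_mk, zero_add]
  rwa [conjHom_tauG_diagElement, hk, hmul, map_mul, mul_eq_right] at h

theorem isPrimitiveRoot_apply_diagElement [NeZero d] (he : e ≠ 0)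
    (hζ : IsPrimitiveRoot ζ (d * e)) {χ : ↥(Gme2 ζ hζ0 e) →* Kˣ}
    (hχ : ∀ (a b : ℤ) (h : (e : ℤ) ∣ a + b), (χ (DG ζ hζ0 e a b h) : K) = ζ ^ (a + b)) :
    IsPrimitiveRoot (χ (diagElement hζ0 e 0 1)) d := by
  rw [← IsPrimitiveRoot.coe_units_iff, MonoidHom.coe_rangeRestrict, diagHom_ofAdd, hχ]
  simpa using hζ.pow (Nat.mul_pos (NeZero.pos d) he.bot_lt) (mul_comm d e)

theorem det_DG (a b : ℤ) (h : (e : ℤ) ∣ a + b) :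
    (Matrix.GeneralLinearGroup.det (DG ζ hζ0 e a b h : GL (Fin 2) K) : K) = ζ ^ (a + b) := by
  change (Dgl ζ hζ0 a b : Matrix (Fin 2) (Fin 2) K).det = _
  rw [coe_Dgl, Matrix.det_fin_two_of, mul_zero, sub_zero, zpow_add₀ hζ0]

variable {δ : diagSubgroup hζ0 e →* Kˣ}

theorem orderOf_of_conjHom_tauG_eq (he : Odd e) (hδ : conjHom (tauG ζ hζ0 e) δ = δ)
    (hroot : IsPrimitiveRoot (δ (diagElement hζ0 e 0 1)) d) : orderOf δ = d := by
  rw [hroot.eq_orderOf, orderOf_eq_orderOf_iff]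
  refine fun n => ⟨fun h => ?_, fun h => diagSubgroup_hom_ext ?_ h⟩
  · rw [← MonoidHom.pow_apply, h, MonoidHom.one_apply]
  · rw [MonoidHom.pow_apply, apply_diagElement_one_zero he hδ, one_pow, MonoidHom.one_apply]

variable [NeZero d]

theorem conjHom_tauG_eq_iff_mem_zpowers (he : Odd e) (hζ : IsPrimitiveRoot ζ (d * e))
    (hδ : conjHom (tauG ζ hζ0 e) δ = δ) (hroot : IsPrimitiveRoot (δ (diagElement hζ0 e 0 1)) d)
    {ψ : diagSubgroup hζ0 e →* Kˣ} :
    conjHom (tauG ζ hζ0 e) ψ = ψ ↔ ψ ∈ Subgroup.zpowers δ := by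
  constructor
  · intro hψ
    have hpow : ψ (diagElement hζ0 e 0 1) ∈ rootsOfUnity d K := by
      have hone : diagElement hζ0 e 0 1 ^ d = 1 := by
        ext1
        rw [Subgroup.coe_pow, MonoidHom.coe_rangeRestrict, ← map_pow, Subgroup.coe_one,
          diagHom_eq_one_iff he.pos.ne' hζ]
        simp
      rw [mem_rootsOfUnity, ← map_pow, hone, map_one]
    obtain ⟨i, hi⟩ := hroot.zpowers_eq.ge hpow
    refine ⟨i, diagSubgroup_hom_ext ?_ hi⟩
    rw [apply_diagElement_one_zero he hψ]
    exact (congrArg (· ^ i) (apply_diagElement_one_zero he hδ)).trans (one_zpow i)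
  · rintro ⟨i, rfl⟩
    ext a
    exact congrArg (fun u : Kˣ => ((u ^ i : Kˣ) : K)) (DFunLike.congr_fun hδ a)

theorem card_conjHom_tauG_fixed (he : Odd e) (hζ : IsPrimitiveRoot ζ (d * e)) :
    Nat.card {ψ : diagSubgroup hζ0 e →* Kˣ // conjHom (tauG ζ hζ0 e) ψ = ψ} = d := by
  let det : ↥(Gme2 ζ hζ0 e) →* Kˣ := Matrix.GeneralLinearGroup.det.comp (Gme2 ζ hζ0 e).subtype
  have hδ := conjHom_domRestrict (A := diagSubgroup hζ0 e) (tauG ζ hζ0 e) det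
  have hroot := isPrimitiveRoot_apply_diagElement (χ := det) he.pos.ne' hζ (det_DG (hζ0 := hζ0))
  rw [Nat.card_congr (Equiv.subtypeEquivRight fun _ =>
    conjHom_tauG_eq_iff_mem_zpowers he hζ hδ hroot)]
  exact (Nat.card_zpowers _).trans (orderOf_of_conjHom_tauG_eq he hδ hroot)

theorem card_irreducibleClasses_Gme2 (he : Odd e) (hζ : IsPrimitiveRoot ζ (d * e)) :
    Nat.card (IrreducibleClasses K ↥(Gme2 ζ hζ0 e) (Fin 2 → K)) = (d * e - 1) * d / 2 := by
  have := finite_diagSubgroup he.pos.ne' hζ (hζ0 := hζ0)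
  have := hasEnoughRootsOfUnity_exponent_diagSubgroup he.pos.ne' hζ (hζ0 := hζ0)
  have h := two_mul_card_irreducibleClasses (K := K) index_diagSubgroup
    tauG_notMem_diagSubgroup (tauG_mul_tauG (hζ0 := hζ0) (e := e))
  rw [card_diagSubgroup he.pos.ne' hζ, card_conjHom_tauG_fixed he hζ] at h
  rw [Nat.sub_one_mul, ← h, Nat.mul_div_cancel_left _ two_pos]

variable {χ ε : ↥(Gme2 ζ hζ0 e) →* Kˣ}

theorem domRestrict_diagSubgroup_eq_one
    (hε : ∀ (a b : ℤ) (h : (e : ℤ) ∣ a + b), ε (DG ζ hζ0 e a b h) = 1) :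
    ε.domRestrict (diagSubgroup hζ0 e) = 1 :=
  diagSubgroup_hom_ext (hε _ _ (by simp)) (hε _ _ (by simp))

theorem range_domRestrictHom_diagSubgroup (he : Odd e) (hζ : IsPrimitiveRoot ζ (d * e))
    (hroot : IsPrimitiveRoot (χ (diagElement hζ0 e 0 1)) d) :
    (MonoidHom.domRestrictHom (diagSubgroup hζ0 e) Kˣ).range =
      Subgroup.zpowers (χ.domRestrict (diagSubgroup hζ0 e)) := by
  refine le_antisymm ?_ (Subgroup.zpowers_le.mpr ⟨χ, rfl⟩)
  rintro _ ⟨ψ, rfl⟩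
  exact (conjHom_tauG_eq_iff_mem_zpowers he hζ (conjHom_domRestrict _ χ) hroot).mp
    (conjHom_domRestrict _ ψ)

end Imprimitive

theorem irreducibles_Gme2_odd_general
    {K : Type*} [Field K] [NeZero (2 : K)] (d e : ℕ) (hd : 0 < d) (hodd : Odd e)
    (ζ : K) (hζ : IsPrimitiveRoot ζ (d * e)) (hζ0 : ζ ≠ 0)
    (χxy χA : ↥(Gme2 ζ hζ0 e) →* Kˣ)
    (hχxyD : ∀ (a b : ℤ) (h : (e : ℤ) ∣ a + b),
      ((χxy (DG ζ hζ0 e a b h) : Kˣ) : K) = ζ ^ (a + b))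
    (hχxyτ : χxy (tauG ζ hζ0 e) = 1)
    (hχAD : ∀ (a b : ℤ) (h : (e : ℤ) ∣ a + b), χA (DG ζ hζ0 e a b h) = 1)
    (hχAτ : ((χA (tauG ζ hζ0 e) : Kˣ) : K) = -1) :
    orderOf χxy = d ∧
    orderOf χA = 2 ∧
    (∀ χ : ↥(Gme2 ζ hζ0 e) →* Kˣ, ∃ i j : ℕ, χ = χxy ^ i * χA ^ j) ∧
    Nat.card (↥(Gme2 ζ hζ0 e) →* Kˣ) = 2 * d ∧
    Nat.card (IrreducibleClasses K ↥(Gme2 ζ hζ0 e) (Fin 2 → K)) = (d * e - 1) * d / 2 ∧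
    (∀ (V : Type*) [AddCommGroup V] [Module K V] (ρ : Representation K ↥(Gme2 ζ hζ0 e) V),
      IsIrreducibleRep ρ → Module.rank K V ≤ 2) := by
  have : NeZero d := ⟨hd.ne'⟩
  have he := hodd.pos.ne'
  have hτ := tauG_notMem_diagSubgroup (hζ0 := hζ0) (e := e)
  have hδ := conjHom_domRestrict (A := diagSubgroup hζ0 e) (tauG ζ hζ0 e) χxy
  have hroot := isPrimitiveRoot_apply_diagElement he hζ hχxyD
  have hδ_order := orderOf_of_conjHom_tauG_eq hodd hδ hroot
  have hχA := domRestrict_diagSubgroup_eq_one hχAD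
  have hχA_order := orderOf_eq_two_of_domRestrict_eq_one index_diagSubgroup hτ hχA (Units.ext hχAτ)
  have hrange := range_domRestrictHom_diagSubgroup hodd hζ hroot
  have hker := ker_domRestrictHom_of_index_eq_two index_diagSubgroup hτ tauG_mul_tauG hχA
    (Units.ext hχAτ)
  have hcount := card_irreducibleClasses_Gme2 hodd hζ (hζ0 := hζ0)
  refine ⟨?_, hχA_order, ?_, ?_, hcount, fun V _ _ ρ hρ => ?_⟩
  · rw [← orderOf_domRestrict_of_index_eq_two index_diagSubgroup hτ hχxyτ, hδ_order]
  · exact exists_eq_pow_mul_pow_of_range_eq_of_ker_eq hrange hker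
      (orderOf_pos_iff.mp (hδ_order.symm ▸ hd)) (orderOf_pos_iff.mp (hχA_order.symm ▸ two_pos))
  · rw [← Subgroup.card_mul_index (MonoidHom.domRestrictHom (diagSubgroup hζ0 e) Kˣ).ker,
      Subgroup.index_ker, hker, hrange, Nat.card_zpowers, Nat.card_zpowers, hχA_order, hδ_order]
  · have := finite_diagSubgroup he hζ (hζ0 := hζ0)
    have := hasEnoughRootsOfUnity_exponent_diagSubgroup he hζ (hζ0 := hζ0)
    exact hρ.rank_le_two index_diagSubgroup

/-!
STATEMENT 12: the irreducible representations of `G = G(m,e,2)` for `e` odd.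
`G` has exactly `2d` one-dimensional representations: the character group of `G` is
generated by `χ(xy)` (of order `d`) and `χ(A)` (of order `2`), so has order `2d`.
Moreover `G` has exactly `(m-1)d/2` isomorphism classes of `2`-dimensional irreducible
representations, and no irreducible representations of dimension greater than `2`.
Here `χ(xy)` is the character with `D(a,b) ↦ ζ^{a+b}`, `τ ↦ 1`, and `χ(A)` is the
character with `D(a,b) ↦ 1`, `τ ↦ -1` (the action on `A = x^m - y^m`).
-/
theorem irreducibles_Gme2_odd
    {K : Type*} [Field K] [CharZero K] (m d e : ℕ) (hd : 0 < d) (he : 0 < e)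
    (hm : m = d * e) (hodd : Odd e)
    (ζ : K) (hζ : IsPrimitiveRoot ζ m) (hζ0 : ζ ≠ 0)
    (χxy χA : ↥(Gme2 ζ hζ0 e) →* Kˣ)
    (hχxyD : ∀ (a b : ℤ) (h : (e : ℤ) ∣ a + b),
      ((χxy (DG ζ hζ0 e a b h) : Kˣ) : K) = ζ ^ (a + b))
    (hχxyτ : χxy (tauG ζ hζ0 e) = 1)
    (hχAD : ∀ (a b : ℤ) (h : (e : ℤ) ∣ a + b), χA (DG ζ hζ0 e a b h) = 1)
    (hχAτ : ((χA (tauG ζ hζ0 e) : Kˣ) : K) = -1) :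
    orderOf χxy = d ∧
    orderOf χA = 2 ∧
    (∀ χ : ↥(Gme2 ζ hζ0 e) →* Kˣ, ∃ i j : ℕ, χ = χxy ^ i * χA ^ j) ∧
    Nat.card (↥(Gme2 ζ hζ0 e) →* Kˣ) = 2 * d ∧
    Nat.card (Quot (fun ρ₁ ρ₂ :
        {ρ : Representation K ↥(Gme2 ζ hζ0 e) (Fin 2 → K) // IsIrreducibleRep ρ} =>
          RepIso ρ₁.1 ρ₂.1)) = (m - 1) * d / 2 ∧
    (∀ (V : Type) [AddCommGroup V] [Module K V] [FiniteDimensional K V]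
        (ρ : Representation K ↥(Gme2 ζ hζ0 e) V),
      IsIrreducibleRep ρ → Module.finrank K V ≤ 2) := by
  subst hm
  obtain ⟨hχxy, hχA, hgen, hcard, hcount, hrank⟩ := irreducibles_Gme2_odd_general d e hd hodd ζ hζ
    hζ0 χxy χA hχxyD hχxyτ hχAD hχAτ
  exact ⟨hχxy, hχA, hgen, hcard, hcount, fun V _ _ _ ρ hρ =>
    Module.finrank_le_of_rank_le (hrank V ρ hρ)⟩
end
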